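/- arXiv:2106.14353 — 5 statements merged into one kernel-verified Lean document; each statement's English description precedes it below -/
import Mathlib

section
/- Let d = 1, δ ∈ (0,2), λ > 0 with δλ ∈ (0,2). Then for every z > 0 the improper integral \widehat{D}(z) = (1/π) lim_{T→∞} ∫₀^T cos(z t) D_{λ,δ}(t) dt exists, and z^{1+δλ} \widehat{D}(z) → 2^{δλ−1} λ δ Γ((1+λδ)/2) / ( √π Γ(1−λδ/2) ) as z → ∞. -/
open MeasureTheory Set Filter intervalIntegral

/-- The Dagum function with parameters `lam > 0`, `δ > 0`:
`D_{λ,δ}(r) = 1 - (r^δ/(1+r^δ))^λ`. -/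
noncomputable def dagum (lam δ r : ℝ) : ℝ := 1 - (r ^ δ / (1 + r ^ δ)) ^ lam

open Complex in
noncomputable def dgG (a d p ε : ℝ) (w : ℂ) : ℂ :=
  cexp (I * cexp w) * cexp (a * w) * (1 + ε * cexp (d * w)) ^ (((-p : ℝ)) : ℂ)

noncomputable def dgB (a d p ε u : ℝ) : ℝ :=
  Real.exp (a * u) * (1 + ε * Real.exp (d * u)) ^ (-p)

lemma dg_k_pos {d : ℝ} (h0 : 0 < d) (h2 : d < 2) : 0 < Real.cos (Real.pi * d / 4) := by
  have := Real.pi_pos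
  apply Real.cos_pos_of_mem_Ioo
  constructor <;> nlinarith

lemma dg_low {d x φ : ℝ} (h0 : 0 < d) (h2 : d < 2) (hx : 0 ≤ x) (hφ0 : 0 ≤ φ)
    (hφ : φ ≤ Real.pi * d / 2) :
    Real.cos (Real.pi * d / 4) * (1 + x) ≤ ‖1 + (x : ℂ) * Complex.exp (φ * Complex.I)‖ := by
  have hpi := Real.pi_pos
  have hk := dg_k_pos h0 h2
  rw [← abs_of_nonneg (a := Real.cos (Real.pi * d / 4) * (1 + x)) (by positivity)]
  apply abs_le_of_sq_le_sq' _ (norm_nonneg _) |> abs_le.mpr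
  rw [← Complex.normSq_eq_norm_sq, Complex.normSq_apply]
  simp only [Complex.add_re, Complex.add_im, Complex.re_ofReal_mul, Complex.im_ofReal_mul,
    Complex.exp_ofReal_mul_I_re, Complex.exp_ofReal_mul_I_im, Complex.one_re, Complex.one_im]
  have h1 : Real.cos (Real.pi * d / 2) ≤ Real.cos φ := by
    apply Real.cos_le_cos_of_nonneg_of_le_pi hφ0 (by nlinarith) hφ
  have h3 : Real.cos (Real.pi * d / 2) = 2 * Real.cos (Real.pi * d / 4) ^ 2 - 1 := by
    rw [← Real.cos_two_mul]; ring_nf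
  have h4 := Real.sin_sq_add_cos_sq φ
  have h5 := Real.sin_sq_add_cos_sq (Real.pi * d / 4)
  set k := Real.cos (Real.pi * d / 4)
  have h6 : x * (2 * k ^ 2 - 1) ≤ x * Real.cos φ := by
    apply mul_le_mul_of_nonneg_left _ hx; linarith
  have h7 : x ^ 2 * (Real.sin φ ^ 2 + Real.cos φ ^ 2) = x ^ 2 := by rw [h4]; ring
  have h8 : (1 - k ^ 2) * (1 - x) ^ 2 ≥ 0 := by
    apply mul_nonneg _ (sq_nonneg _)
    nlinarith [sq_nonneg (Real.sin (Real.pi * d / 4))]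
  nlinarith

lemma dg_slit {d x φ : ℝ} (h0 : 0 < d) (h2 : d < 2) (hx : 0 ≤ x) (hφ0 : 0 ≤ φ)
    (hφ : φ ≤ Real.pi * d / 2) :
    1 + (x : ℂ) * Complex.exp (φ * Complex.I) ∈ Complex.slitPlane := by
  have hpi := Real.pi_pos
  rw [Complex.mem_slitPlane_iff]
  simp only [Complex.add_re, Complex.add_im, Complex.re_ofReal_mul, Complex.im_ofReal_mul,
    Complex.exp_ofReal_mul_I_re, Complex.exp_ofReal_mul_I_im, Complex.one_re, Complex.one_im]
  rcases hφ0.eq_or_lt with h | h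
  · left; rw [← h]; simp; linarith
  · rcases hx.eq_or_lt with h' | h'
    · left; rw [← h']; simp
    · right
      have := Real.sin_pos_of_pos_of_lt_pi h (by nlinarith)
      positivity

lemma dg_exp_split (d ε u θ : ℝ) : (ε : ℂ) * Complex.exp (d * (u + θ * Complex.I)) =
    ((ε * Real.exp (d * u) : ℝ) : ℂ) * Complex.exp ((d * θ : ℝ) * Complex.I) := by
  push_cast
  rw [mul_assoc, ← Complex.exp_add]
  ring_nf

lemma dg_pow_bound {d p x φ : ℝ} (h0 : 0 < d) (h2 : d < 2) (hp : 0 < p) (hx : 0 ≤ x) (hφ0 : 0 ≤ φ)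
    (hφ : φ ≤ Real.pi * d / 2) :
    ‖(1 + (x : ℂ) * Complex.exp (φ * Complex.I)) ^ (((-p : ℝ)) : ℂ)‖ ≤
      Real.cos (Real.pi * d / 4) ^ (-p) * (1 + x) ^ (-p) := by
  have hk := dg_k_pos h0 h2
  rw [Complex.norm_cpow_real, ← Real.mul_rpow hk.le (by positivity)]
  apply Real.rpow_le_rpow_of_nonpos (by positivity) (dg_low h0 h2 hx hφ0 hφ) (by linarith)

lemma dg_bound {a d p ε : ℝ} (h0 : 0 < d) (h2 : d < 2) (hp : 0 < p) (hε : 0 < ε)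
    (u θ : ℝ) (hθ0 : 0 ≤ θ) (hθ : θ ≤ Real.pi / 2) :
    ‖dgG a d p ε (u + θ * Complex.I)‖ ≤ Real.cos (Real.pi * d / 4) ^ (-p) * dgB a d p ε u := by
  have hpi := Real.pi_pos
  have hk := dg_k_pos h0 h2
  unfold dgG dgB
  rw [dg_exp_split, norm_mul, norm_mul]
  have h1 : ‖Complex.exp (Complex.I * Complex.exp (u + θ * Complex.I))‖ ≤ 1 := by
    rw [Complex.norm_exp, Complex.exp_add, ← Complex.ofReal_exp, Complex.I_mul_re,
      Complex.im_ofReal_mul, Complex.exp_ofReal_mul_I_im, Real.exp_le_one_iff]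
    have := Real.sin_nonneg_of_nonneg_of_le_pi hθ0 (by linarith)
    have := mul_nonneg (Real.exp_pos u).le this
    linarith
  have h3 : ‖Complex.exp (a * (u + θ * Complex.I))‖ = Real.exp (a * u) := by
    rw [Complex.norm_exp]; simp
  have h4 := dg_pow_bound h0 h2 hp (x := ε * Real.exp (d * u)) (φ := d * θ) (by positivity)
    (by positivity) (by nlinarith)
  rw [h3]
  calc _ ≤ 1 * Real.exp (a * u) * (Real.cos (Real.pi * d / 4) ^ (-p) *
          (1 + ε * Real.exp (d * u)) ^ (-p)) := by gcongr
    _ = _ := by ring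

lemma dgB_le1 {a d p ε : ℝ} (hp : 0 < p) (hε : 0 < ε) (u : ℝ) :
    dgB a d p ε u ≤ Real.exp (a * u) := by
  unfold dgB
  have : (1 + ε * Real.exp (d * u)) ^ (-p) ≤ 1 :=
    Real.rpow_le_one_of_one_le_of_nonpos (by have := Real.exp_pos (d * u); nlinarith) (by linarith)
  nlinarith [Real.exp_pos (a * u)]

lemma dgB_le2 {a d p ε : ℝ} (hp : 0 < p) (hε : 0 < ε) (u : ℝ) :
    dgB a d p ε u ≤ ε ^ (-p) * Real.exp ((a - d * p) * u) := by
  unfold dgB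
  have : (1 + ε * Real.exp (d * u)) ^ (-p) ≤ (ε * Real.exp (d * u)) ^ (-p) :=
    Real.rpow_le_rpow_of_nonpos (by positivity) (by linarith) (by linarith)
  rw [Real.mul_rpow hε.le (by positivity), ← Real.exp_mul] at this
  calc _ ≤ Real.exp (a * u) * (ε ^ (-p) * Real.exp (d * u * -p)) := by gcongr
    _ = ε ^ (-p) * (Real.exp (a * u) * Real.exp (d * u * -p)) := by ring
    _ = _ := by rw [← Real.exp_add]; ring_nf

lemma dgB_nonneg {a d p ε : ℝ} (hε : 0 < ε) (u : ℝ) : 0 ≤ dgB a d p ε u := by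
  unfold dgB; positivity

lemma dgB_cont {a d p ε : ℝ} (hε : 0 < ε) : Continuous (dgB a d p ε) := by
  unfold dgB
  refine Continuous.mul (by fun_prop) (Continuous.rpow_const (by fun_prop) ?_)
  intro x; left; positivity

lemma dgB_int {a d p ε : ℝ} (ha : 0 < a) (hp : 0 < p) (hε : 0 < ε) (hadp : a < d * p) :
    Integrable (dgB a d p ε) := by
  rw [← integrableOn_univ, ← Iic_union_Ioi (a := (0:ℝ))]
  apply IntegrableOn.union
  · refine Integrable.mono' (integrableOn_exp_mul_Iic ha 0) (dgB_cont hε).aestronglyMeasurable ?_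
    filter_upwards with u
    rw [Real.norm_of_nonneg (dgB_nonneg hε u)]
    exact dgB_le1 hp hε u
  · refine Integrable.mono' ((integrableOn_exp_mul_Ioi (a := a - d * p) (by linarith) 0).const_mul
      (ε ^ (-p))) (dgB_cont hε).aestronglyMeasurable ?_
    filter_upwards with u
    rw [Real.norm_of_nonneg (dgB_nonneg hε u)]
    exact dgB_le2 hp hε u

lemma dgB_top {a d p ε : ℝ} (hp : 0 < p) (hε : 0 < ε) (hadp : a < d * p) :
    Tendsto (dgB a d p ε) atTop (nhds 0) := by
  refine squeeze_zero (fun u => dgB_nonneg hε u) (fun u => dgB_le2 hp hε u) ?_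
  rw [← mul_zero (ε ^ (-p))]
  apply Tendsto.const_mul
  exact Real.tendsto_exp_atBot.comp (tendsto_id.const_mul_atTop_of_neg (by linarith))

lemma dgB_bot {a d p ε : ℝ} (ha : 0 < a) (hp : 0 < p) (hε : 0 < ε) :
    Tendsto (dgB a d p ε) atBot (nhds 0) := by
  refine squeeze_zero (fun u => dgB_nonneg hε u) (fun u => dgB_le1 hp hε u) ?_
  exact Real.tendsto_exp_atBot.comp (tendsto_id.const_mul_atBot ha)

lemma dgG_diff {a d p ε : ℝ} (h0 : 0 < d) (h2 : d < 2) (hε : 0 < ε)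
    (u θ : ℝ) (hθ0 : 0 ≤ θ) (hθ : θ ≤ Real.pi / 2) :
    DifferentiableAt ℂ (dgG a d p ε) (u + θ * Complex.I) := by
  unfold dgG
  refine DifferentiableAt.mul (by fun_prop) (DifferentiableAt.cpow (by fun_prop) (by fun_prop) ?_)
  rw [dg_exp_split]
  apply dg_slit h0 h2 (by positivity) (by positivity) (by nlinarith)

lemma dgG_int {a d p ε : ℝ} (ha : 0 < a) (h0 : 0 < d) (h2 : d < 2) (hp : 0 < p) (hε : 0 < ε)
    (hadp : a < d * p) (θ : ℝ) (hθ0 : 0 ≤ θ) (hθ : θ ≤ Real.pi / 2) :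
    Integrable (fun u : ℝ => dgG a d p ε (u + θ * Complex.I)) := by
  refine Integrable.mono' ((dgB_int ha hp hε hadp).const_mul
    (Real.cos (Real.pi * d / 4) ^ (-p))) (Continuous.aestronglyMeasurable ?_)
    (Eventually.of_forall fun u => dg_bound h0 h2 hp hε u θ hθ0 hθ)
  rw [continuous_iff_continuousAt]
  intro u
  exact ContinuousAt.comp' (f := fun u : ℝ => (u : ℂ) + θ * Complex.I)
    (dgG_diff h0 h2 hε u θ hθ0 hθ).continuousAt (by fun_prop)

lemma dg_shift {a d p ε : ℝ} (ha : 0 < a) (h0 : 0 < d) (h2 : d < 2) (hp : 0 < p) (hε : 0 < ε)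
    (hadp : a < d * p) :
    ∫ u : ℝ, dgG a d p ε (u + (0 : ℝ) * Complex.I) =
      ∫ u : ℝ, dgG a d p ε (u + (Real.pi / 2 : ℝ) * Complex.I) := by
  have hpi := Real.pi_pos
  have hrect : ∀ R : ℝ, (∫ x : ℝ in (-R)..R, dgG a d p ε (x + (0 : ℝ) * Complex.I)) -
      (∫ x : ℝ in (-R)..R, dgG a d p ε (x + (Real.pi / 2 : ℝ) * Complex.I)) +
      Complex.I • (∫ y : ℝ in (0:ℝ)..(Real.pi / 2), dgG a d p ε ((R : ℝ) + y * Complex.I)) -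
      Complex.I • (∫ y : ℝ in (0:ℝ)..(Real.pi / 2), dgG a d p ε ((-R : ℝ) + y * Complex.I)) = 0 := by
    intro R
    have := Complex.integral_boundary_rect_eq_zero_of_differentiableOn (dgG a d p ε)
      ⟨-R, 0⟩ ⟨R, Real.pi / 2⟩ ?_
    · exact this
    · intro w hw
      rw [Complex.mem_reProdIm] at hw
      have h := hw.2
      simp only [] at h
      rw [uIcc_of_le (by linarith)] at h
      rw [← Complex.re_add_im w]
      exact (dgG_diff h0 h2 hε w.re w.im h.1 h.2).differentiableWithinAt
  have hv : ∀ l : Filter ℝ, Tendsto (dgB a d p ε) l (nhds 0) → Tendsto (fun R : ℝ =>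
      ∫ y : ℝ in (0:ℝ)..(Real.pi / 2), dgG a d p ε ((R : ℝ) + y * Complex.I)) l (nhds 0) := by
    intro l hl
    refine squeeze_zero_norm (a := fun R => Real.cos (Real.pi * d / 4) ^ (-p) * dgB a d p ε R *
      |Real.pi / 2 - 0|) (fun R => ?_) ?_
    · apply intervalIntegral.norm_integral_le_of_norm_le_const
      intro y hy
      rw [uIoc_of_le (by linarith)] at hy
      exact dg_bound h0 h2 hp hε R y hy.1.le hy.2
    · have := (hl.const_mul (Real.cos (Real.pi * d / 4) ^ (-p))).mul_const |Real.pi / 2 - 0|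
      simpa using this
  have t1 := hv atTop (dgB_top hp hε hadp)
  have t2 := (hv atBot (dgB_bot ha hp hε)).comp tendsto_neg_atTop_atBot
  have t3 := intervalIntegral_tendsto_integral
    (dgG_int ha h0 h2 hp hε hadp 0 le_rfl (by positivity)) tendsto_neg_atTop_atBot tendsto_id
  have t4 := intervalIntegral_tendsto_integral
    (dgG_int ha h0 h2 hp hε hadp (Real.pi / 2) (by positivity) le_rfl)
      tendsto_neg_atTop_atBot tendsto_id
  have t5 := ((t3.sub t4).add (t1.const_smul Complex.I)).sub (t2.const_smul Complex.I)
  have t6 := tendsto_nhds_unique t5 (tendsto_const_nhds.congr fun R => (hrect R).symm)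
  simpa [sub_eq_zero] using t6

lemma dg_expsub {E : Type*} [NormedAddCommGroup E] [NormedSpace ℝ E] (f : ℝ → E) :
    ∫ s in Ioi (0:ℝ), f s = ∫ u, Real.exp u • f (Real.exp u) := by
  have := integral_image_eq_integral_abs_deriv_smul (s := univ) (f := Real.exp)
    (f' := Real.exp) MeasurableSet.univ (fun x _ => (Real.hasDerivAt_exp x).hasDerivWithinAt)
    Real.exp_injective.injOn f
  rw [image_univ, Real.range_exp] at this
  simpa using this

lemma dg_expsub_int {E : Type*} [NormedAddCommGroup E] [NormedSpace ℝ E] (f : ℝ → E) :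
    IntegrableOn f (Ioi (0:ℝ)) ↔ Integrable fun u => Real.exp u • f (Real.exp u) := by
  have := integrableOn_image_iff_integrableOn_abs_deriv_smul (s := univ) (f := Real.exp)
    (f' := Real.exp) MeasurableSet.univ (fun x _ => (Real.hasDerivAt_exp x).hasDerivWithinAt)
    Real.exp_injective.injOn f
  rw [image_univ, Real.range_exp] at this
  simpa using this

noncomputable def dgS (a d p ε : ℝ) : ℝ :=
  ∫ s in Ioi (0:ℝ), Real.sin s * s ^ (a - 1) * (1 + ε * s ^ d) ^ (-p)

noncomputable def dgR (a d p ε s : ℝ) : ℂ :=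
  ((Real.exp (-s) * s ^ (a - 1) : ℝ) : ℂ) *
    (1 + ((ε * s ^ d : ℝ) : ℂ) * Complex.exp ((d * (Real.pi / 2) : ℝ) * Complex.I)) ^ ((-p : ℝ) : ℂ)

lemma dg_sine {a d p ε : ℝ} (ha : 0 < a) (h0 : 0 < d) (h2 : d < 2) (hp : 0 < p) (hε : 0 < ε)
    (hadp : a < d * p) :
    dgS a d p ε = (Complex.exp ((a * (Real.pi / 2) : ℝ) * Complex.I) *
      ∫ s in Ioi (0:ℝ), dgR a d p ε s).im := by
  have hpi := Real.pi_pos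
  have e1 : dgS a d p ε = (∫ u : ℝ, dgG a d p ε (u + (0 : ℝ) * Complex.I)).im := by
    unfold dgS
    rw [dg_expsub]
    have := integral_im (dgG_int ha h0 h2 hp hε hadp 0 le_rfl (by positivity))
    refine Eq.trans ?_ this
    congr 1
    ext u
    have : dgG a d p ε (u + (0 : ℝ) * Complex.I) =
        ((Real.exp (a * u) * (1 + ε * Real.exp (d * u)) ^ (-p) : ℝ) : ℂ) *
          Complex.exp ((Real.exp u : ℝ) * Complex.I) := by
      unfold dgG
      rw [dg_exp_split]
      rw [Complex.ofReal_mul (Real.exp (a * u)), Complex.ofReal_cpow (by positivity)]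
      push_cast
      simp
      ring_nf
    rw [this]
    change _ = Complex.im _
    rw [Complex.im_ofReal_mul, Complex.exp_ofReal_mul_I_im, ← Real.exp_mul, ← Real.exp_mul,
      smul_eq_mul]
    have h : Real.exp (a * u) = Real.exp u * Real.exp (u * (a - 1)) := by
      rw [← Real.exp_add]; ring_nf
    rw [h, mul_comm d u]
    ring
  rw [e1, dg_shift ha h0 h2 hp hε hadp, dg_expsub, ← MeasureTheory.integral_const_mul]
  congr 2
  ext u
  unfold dgG dgR
  rw [dg_exp_split, ← Real.exp_mul, ← Real.exp_mul, mul_comm d u]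
  have h1 : Complex.I * Complex.exp (u + (Real.pi / 2 : ℝ) * Complex.I) = ((-Real.exp u : ℝ) : ℂ) := by
    rw [Complex.exp_add]
    push_cast
    rw [Complex.exp_pi_div_two_mul_I]
    linear_combination Complex.exp u * Complex.I_mul_I
  have h3 : Complex.exp (a * (u + (Real.pi / 2 : ℝ) * Complex.I)) =
      Complex.exp ((a * (Real.pi / 2) : ℝ) * Complex.I) *
        ((Real.exp u * Real.exp (u * (a - 1)) : ℝ) : ℂ) := by
    push_cast
    rw [← Complex.exp_add, ← Complex.exp_add]
    ring_nf
  rw [h1, h3, Complex.real_smul]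
  push_cast
  ring

lemma dg_lim {a d p : ℝ} (ha : 0 < a) (h0 : 0 < d) (h2 : d < 2) (hp : 0 < p) :
    Tendsto (fun ε : ℝ => ∫ s in Ioi (0:ℝ), dgR a d p ε s) (nhdsWithin 0 (Ioi 0))
      (nhds ((Real.Gamma a : ℝ) : ℂ)) := by
  have hpi := Real.pi_pos
  rw [Real.Gamma_eq_integral ha, ← integral_complex_ofReal]
  refine tendsto_integral_filter_of_dominated_convergence
    (fun s => Real.cos (Real.pi * d / 4) ^ (-p) * (Real.exp (-s) * s ^ (a - 1))) ?_ ?_ ?_ ?_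
  · filter_upwards [self_mem_nhdsWithin] with ε hε
    refine ContinuousOn.aestronglyMeasurable (fun s hs => ?_) measurableSet_Ioi
    have hε : 0 < ε := hε
    have hs : 0 < s := hs
    apply ContinuousAt.continuousWithinAt
    unfold dgR
    have c1 : ∀ b : ℝ, ContinuousAt (fun s : ℝ => s ^ b) s := fun b =>
      Real.continuousAt_rpow_const _ _ (Or.inl hs.ne')
    refine ContinuousAt.mul ?_ (ContinuousAt.cpow ?_ continuousAt_const ?_)
    · exact Complex.continuous_ofReal.continuousAt.comp
        ((by fun_prop : ContinuousAt (fun s : ℝ => Real.exp (-s)) s).mul (c1 _))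
    · refine continuousAt_const.add (ContinuousAt.mul ?_ continuousAt_const)
      exact Complex.continuous_ofReal.continuousAt.comp (continuousAt_const.mul (c1 _))
    · exact dg_slit h0 h2 (by positivity) (by positivity) (by linarith)
  · filter_upwards [self_mem_nhdsWithin] with ε hε
    have hε : 0 < ε := hε
    filter_upwards [ae_restrict_mem measurableSet_Ioi] with s hs
    have hs : 0 < s := hs
    unfold dgR
    have h4 := dg_pow_bound h0 h2 hp (x := ε * s ^ d) (φ := d * (Real.pi / 2)) (by positivity)
      (by positivity) (by linarith)
    have h5 : (1 + ε * s ^ d) ^ (-p) ≤ 1 :=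
      Real.rpow_le_one_of_one_le_of_nonpos (by have : 0 < ε * s ^ d := by positivity
                                               linarith) (by linarith)
    have hk := dg_k_pos h0 h2
    rw [norm_mul, Complex.norm_real, Real.norm_of_nonneg (by positivity), mul_comm]
    gcongr
    refine h4.trans ?_
    have : 0 < Real.cos (Real.pi * d / 4) ^ (-p) := by positivity
    nlinarith
  · exact (Real.GammaIntegral_convergent ha).const_mul _
  · filter_upwards [ae_restrict_mem measurableSet_Ioi] with s hs
    unfold dgR
    have : ContinuousAt (fun ε : ℝ => ((Real.exp (-s) * s ^ (a - 1) : ℝ) : ℂ) *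
      (1 + ((ε * s ^ d : ℝ) : ℂ) * Complex.exp ((d * (Real.pi / 2) : ℝ) * Complex.I))
        ^ ((-p : ℝ) : ℂ)) 0 := by
      refine continuousAt_const.mul (ContinuousAt.cpow (by fun_prop) continuousAt_const ?_)
      simp
    have := this.tendsto.mono_left (nhdsWithin_le_nhds (s := Ioi 0))
    simpa using this

lemma dg_Slim {a d p : ℝ} (ha : 0 < a) (h0 : 0 < d) (h2 : d < 2) (hp : 0 < p)
    (hadp : a < d * p) :
    Tendsto (fun ε : ℝ => dgS a d p ε) (nhdsWithin 0 (Ioi 0))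
      (nhds (Real.sin (a * (Real.pi / 2)) * Real.Gamma a)) := by
  have h := Complex.continuous_im.continuousAt.tendsto.comp
    ((dg_lim ha h0 h2 hp).const_mul (Complex.exp ((a * (Real.pi / 2) : ℝ) * Complex.I)))
  rw [mul_comm (Complex.exp _), Complex.im_ofReal_mul, Complex.exp_ofReal_mul_I_im, mul_comm (Real.Gamma a)] at h
  refine h.congr' ?_
  filter_upwards [self_mem_nhdsWithin] with ε hε
  exact (dg_sine ha h0 h2 hp hε hadp).symm

lemma dg_scale {a d p z : ℝ} (hz : 0 < z) :
    ∫ t in Ioi (0:ℝ), Real.sin (z * t) * (a * t ^ (a - 1) * (1 + t ^ d) ^ (-p)) =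
      a * z ^ (-a) * dgS a d p (z ^ (-d)) := by
  have h := integral_comp_mul_left_Ioi
    (fun s => Real.sin s * s ^ (a - 1) * (1 + z ^ (-d) * s ^ d) ^ (-p)) 0 hz
  rw [mul_zero] at h
  unfold dgS
  have h' : ∫ s in Ioi (0:ℝ), Real.sin s * s ^ (a - 1) * (1 + z ^ (-d) * s ^ d) ^ (-p) =
      z * ∫ t in Ioi (0:ℝ), Real.sin (z * t) * (z * t) ^ (a - 1) *
        (1 + z ^ (-d) * (z * t) ^ d) ^ (-p) := by
    rw [h, smul_eq_mul]; field_simp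
  rw [h', ← MeasureTheory.integral_const_mul, ← MeasureTheory.integral_const_mul]
  refine setIntegral_congr_fun measurableSet_Ioi fun t ht => ?_
  have ht : 0 < t := ht
  rw [Real.mul_rpow hz.le ht.le, Real.mul_rpow hz.le ht.le, ← mul_assoc (z ^ (-d)),
    ← Real.rpow_add hz, neg_add_cancel, Real.rpow_zero, one_mul]
  have : z ^ (-a) * (z * z ^ (a - 1)) = 1 := by
    nth_rewrite 2 [← Real.rpow_one z]
    rw [← Real.rpow_add hz, ← Real.rpow_add hz]
    ring_nf
    simp
  linear_combination -(a * Real.sin (z * t) * t ^ (a - 1) * (1 + t ^ d) ^ (-p)) * this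

lemma dg_dF_int {a d p : ℝ} (ha : 0 < a) (hp : 0 < p) (hadp : a < d * p) :
    IntegrableOn (fun t : ℝ => a * t ^ (a - 1) * (1 + t ^ d) ^ (-p)) (Ioi 0) := by
  rw [dg_expsub_int]
  refine ((dgB_int ha hp one_pos hadp).const_mul a).congr (Eventually.of_forall fun u => ?_)
  simp only [dgB]
  rw [← Real.exp_mul, ← Real.exp_mul, smul_eq_mul]
  have h : Real.exp (a * u) = Real.exp u * Real.exp (u * (a - 1)) := by
    rw [← Real.exp_add]; ring_nf
  rw [h, mul_comm d u, one_mul]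
  ring

lemma dg_deriv {δ lam t : ℝ} (ht : 0 < t) :
    HasDerivAt (dagum lam δ)
      (-(δ * lam * t ^ (δ * lam - 1) * (1 + t ^ δ) ^ (-(lam + 1)))) t := by
  have hq : 0 < t ^ δ := by positivity
  have h1 : HasDerivAt (fun x : ℝ => x ^ δ) (δ * t ^ (δ - 1)) t :=
    Real.hasDerivAt_rpow_const (Or.inl ht.ne')
  have h2 := ((h1.div (h1.const_add 1) (by positivity)).rpow_const (p := lam)
    (Or.inl (by simp only [Pi.div_apply]; positivity))).const_sub 1
  refine h2.congr_deriv ?_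
  simp only [Pi.div_apply]
  rw [Real.div_rpow hq.le (by positivity), ← Real.rpow_mul ht.le,
    show -(lam + 1) = -(lam - 1) + -(2 : ℕ) by push_cast; ring,
    Real.rpow_add (by positivity : 0 < 1 + t ^ δ), Real.rpow_neg (by positivity),
    Real.rpow_neg (by positivity), Real.rpow_natCast]
  have h3 : t ^ (δ * lam - 1) = t ^ (δ * (lam - 1)) * t ^ (δ - 1) := by
    rw [← Real.rpow_add ht]; ring_nf
  rw [h3]
  field_simp
  ring

lemma dg_cont {δ lam : ℝ} (hδ : 0 < δ) (hlam : 0 < lam) :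
    ContinuousOn (dagum lam δ) (Ici 0) := by
  unfold dagum
  have h1 : Continuous (fun x : ℝ => x ^ δ) := Real.continuous_rpow_const hδ.le
  refine continuousOn_const.sub (ContinuousOn.rpow_const ?_ (fun _ _ => Or.inr hlam.le))
  refine h1.continuousOn.div (by fun_prop) (fun x hx => ?_)
  have : 0 ≤ x ^ δ := Real.rpow_nonneg hx _
  positivity

lemma dg_top {δ lam : ℝ} (hδ : 0 < δ) (hlam : 0 < lam) :
    Tendsto (dagum lam δ) atTop (nhds 0) := by
  unfold dagum
  have h1 : Tendsto (fun x : ℝ => 1 - (1 + x ^ δ)⁻¹) atTop (nhds (1 - 0)) :=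
    tendsto_const_nhds.sub (tendsto_inv_atTop_zero.comp
      (tendsto_atTop_add_const_left _ _ (tendsto_rpow_atTop hδ)))
  have h2 : Tendsto (fun x : ℝ => x ^ δ / (1 + x ^ δ)) atTop (nhds 1) := by
    rw [sub_zero] at h1
    refine h1.congr' ?_
    filter_upwards [eventually_gt_atTop 0] with x hx
    field_simp
    ring
  have h3 := (h2.rpow_const (p := lam) (Or.inr hlam.le)).const_sub 1
  simpa using h3

lemma dg_exists {δ lam z : ℝ} (hδ : 0 < δ) (hlam : 0 < lam) (hz : 0 < z) :
    Tendsto (fun T : ℝ => ∫ t in (0 : ℝ)..T, Real.cos (z * t) * dagum lam δ t) atTop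
      (nhds (z⁻¹ * (δ * lam * z ^ (-(δ * lam)) * dgS (δ * lam) δ (lam + 1) (z ^ (-δ))))) := by
  have hint := dg_dF_int (a := δ * lam) (d := δ) (p := lam + 1) (by positivity) (by positivity)
    (by linarith)
  have hint2 : IntegrableOn (fun t => Real.sin (z * t) *
      (δ * lam * t ^ (δ * lam - 1) * (1 + t ^ δ) ^ (-(lam + 1)))) (Ioi 0) := by
    refine Integrable.bdd_mul (c := 1) hint (by fun_prop) (Eventually.of_forall fun t => ?_)
    exact Real.abs_sin_le_one _
  have hlim := intervalIntegral_tendsto_integral_Ioi 0 hint2 tendsto_id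
  rw [dg_scale hz] at hlim
  have hb : Tendsto (fun T => dagum lam δ T * (z⁻¹ * Real.sin (z * T))) atTop (nhds 0) := by
    refine squeeze_zero_norm (a := fun T => ‖dagum lam δ T‖ * z⁻¹) (fun T => ?_) ?_
    · rw [norm_mul, norm_mul, Real.norm_of_nonneg (inv_pos.mpr hz).le]
      have := Real.abs_sin_le_one (z * T)
      rw [← Real.norm_eq_abs] at this
      gcongr
      exact mul_le_of_le_one_right (by positivity) this
    · simpa using (dg_top hδ hlam).norm.mul_const z⁻¹
  have := hb.add (hlim.const_mul z⁻¹)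
  rw [zero_add] at this
  refine this.congr' ?_
  filter_upwards [eventually_gt_atTop 0] with T hT
  have hp := intervalIntegral.integral_mul_deriv_eq_deriv_mul_of_hasDerivAt (a := 0) (b := T)
    (u := dagum lam δ) (v := fun t => z⁻¹ * Real.sin (z * t))
    (u' := fun t => -(δ * lam * t ^ (δ * lam - 1) * (1 + t ^ δ) ^ (-(lam + 1))))
    (v' := fun t => Real.cos (z * t))
    ((dg_cont hδ hlam).mono (by rw [uIcc_of_le hT.le]; exact Icc_subset_Ici_self)) (by fun_prop)
    (fun x hx => dg_deriv (by rw [min_eq_left hT.le] at hx; exact hx.1))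
    (fun x hx => by
      have := ((Real.hasDerivAt_sin (z * x)).comp x ((hasDerivAt_id x).const_mul z)).const_mul z⁻¹
      refine this.congr_deriv ?_
      field_simp)
    (by
      rw [intervalIntegrable_iff_integrableOn_Ioc_of_le hT.le]
      exact (hint.mono_set Ioc_subset_Ioi_self).neg)
    ((by fun_prop : Continuous fun t => Real.cos (z * t)).intervalIntegrable _ _)
  simp only [mul_comm (Real.cos _)]
  rw [hp]
  simp only [mul_zero, Real.sin_zero, sub_zero, id]
  rw [← intervalIntegral.integral_const_mul, sub_eq_add_neg (dagum lam δ T * _), ← intervalIntegral.integral_neg]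
  congr 2
  ext t
  ring

lemma dg_const {a : ℝ} (ha : 0 < a) (ha2 : a < 2) :
    1 / Real.pi * (a * (Real.sin (a * (Real.pi / 2)) * Real.Gamma a)) =
      2 ^ (a - 1) * a * Real.Gamma ((1 + a) / 2) / (Real.sqrt Real.pi * Real.Gamma (1 - a / 2)) := by
  have hpi := Real.pi_pos
  have h1 := Real.Gamma_mul_Gamma_add_half (a / 2)
  have h2 := Real.Gamma_mul_Gamma_one_sub (a / 2)
  rw [show a / 2 + 1 / 2 = (1 + a) / 2 by ring, show 2 * (a / 2) = a by ring] at h1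
  have g1 : 0 < Real.Gamma (a / 2) := Real.Gamma_pos_of_pos (by positivity)
  have g2 : 0 < Real.Gamma (1 - a / 2) := Real.Gamma_pos_of_pos (by linarith)
  have hs : 0 < Real.sin (Real.pi * (a / 2)) :=
    Real.sin_pos_of_pos_of_lt_pi (by positivity) (by nlinarith)
  have hq : 0 < Real.sqrt Real.pi := Real.sqrt_pos.mpr hpi
  have h3 : (2:ℝ) ^ (1 - a) * 2 ^ (a - 1) = 1 := by
    rw [← Real.rpow_add two_pos]; simp
  rw [show a * (Real.pi / 2) = Real.pi * (a / 2) by ring]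
  have h4 : Real.Gamma ((1 + a) / 2) =
      Real.Gamma a * 2 ^ (1 - a) * √Real.pi / Real.Gamma (a / 2) := by
    rw [← h1]; field_simp
  have h5 : Real.Gamma (1 - a / 2) = Real.pi / Real.sin (Real.pi * (a / 2)) / Real.Gamma (a / 2) := by
    rw [← h2]; field_simp
  rw [h4, h5]
  field_simp
  linear_combination -Real.sin (Real.pi * a / 2) * h3

/-- High-frequency behaviour in dimension `d = 1` for `δ ∈ (0,2)`, `δλ ∈ (0,2)`:
the improper integral `\widehat D(z) = (1/π) lim_{T→∞} ∫₀^T cos(zt) D_{λ,δ}(t) dt`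
exists for every `z > 0`, and
`z^{1+δλ} \widehat D(z) → 2^{δλ-1} λ δ Γ((1+λδ)/2)/(√π Γ(1-λδ/2))` as `z → ∞`. -/
theorem dagum_high_frequency_dim_one (δ lam : ℝ) (hδ0 : 0 < δ) (hδ2 : δ < 2)
    (hlam : 0 < lam) (hdl0 : 0 < δ * lam) (hdl2 : δ * lam < 2) :
    ∃ Dh : ℝ → ℝ,
      (∀ z : ℝ, 0 < z →
        Tendsto (fun T : ℝ => (1 / Real.pi) * ∫ t in (0 : ℝ)..T, Real.cos (z * t) * dagum lam δ t)
          atTop (nhds (Dh z))) ∧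
      Tendsto (fun z : ℝ => z ^ (1 + δ * lam) * Dh z) atTop
        (nhds (2 ^ (δ * lam - 1) * lam * δ * Real.Gamma ((1 + lam * δ) / 2) /
          (Real.sqrt Real.pi * Real.Gamma (1 - lam * δ / 2)))) := by
  refine ⟨fun z => 1 / Real.pi *
    (z⁻¹ * (δ * lam * z ^ (-(δ * lam)) * dgS (δ * lam) δ (lam + 1) (z ^ (-δ)))),
    fun z hz => (dg_exists hδ0 hlam hz).const_mul _, ?_⟩
  have hε : Tendsto (fun z : ℝ => z ^ (-δ)) atTop (nhdsWithin 0 (Ioi 0)) := by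
    refine tendsto_nhdsWithin_iff.mpr ⟨tendsto_rpow_neg_atTop hδ0, ?_⟩
    filter_upwards [eventually_gt_atTop 0] with z hz
    exact Real.rpow_pos_of_pos hz _
  have h := (((dg_Slim (p := lam + 1) hdl0 hδ0 hδ2 (by positivity) (by linarith)).comp hε).const_mul
    (δ * lam)).const_mul (1 / Real.pi)
  rw [dg_const hdl0 hdl2] at h
  rw [mul_comm lam δ, mul_assoc _ lam δ, mul_comm lam δ]
  refine h.congr' ?_
  filter_upwards [eventually_gt_atTop 0] with z hz
  have : z ^ (1 + δ * lam) * (z⁻¹ * z ^ (-(δ * lam))) = 1 := by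
    rw [← Real.rpow_neg_one z, ← Real.rpow_add hz, ← Real.rpow_add hz]
    ring_nf
    simp
  simp only [Function.comp]
  linear_combination -(1 / Real.pi * (δ * lam) * dgS (δ * lam) δ (lam + 1) (z ^ (-δ))) * this
end

section
/- Let d = 3, δ ∈ (1,2), λ > 0 with δλ ∈ (0,2). Then for every z > 0 the improper integral \widehat{D}_3(z) = (1/(2π² z)) lim_{T→∞} ∫₀^T r sin(z r) D_{λ,δ}(r) dr exists, and z^{3+δλ} \widehat{D}_3(z) → 2^{δλ−1} λ δ Γ((3+λδ)/2) / ( π^{3/2} Γ(1−λδ/2) ) as z → ∞. -/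
open MeasureTheory Set Filter intervalIntegral

namespace DagumAux

open Complex Topology

/-- Complex extension of `r * dagum lam δ r`. -/
noncomputable def F (lam δ : ℝ) (ζ : ℂ) : ℂ :=
  ζ * (1 - (ζ ^ (δ : ℂ) / (1 + ζ ^ (δ : ℂ))) ^ (lam : ℂ))

lemma slit_of_re {ζ : ℂ} (h0 : ζ ≠ 0) (hre : 0 ≤ ζ.re) : ζ ∈ slitPlane := by
  rw [mem_slitPlane_iff]
  by_contra! h
  exact h0 (Complex.ext (le_antisymm h.1 hre) h.2)

lemma cpow_slit {δ : ℝ} (hδ0 : 0 < δ) (hδ2 : δ < 2) {ζ : ℂ} (h0 : ζ ≠ 0) (hre : 0 ≤ ζ.re) :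
    ζ ^ (δ : ℂ) ∈ slitPlane := by
  have harg := abs_arg_le_pi_div_two_iff.2 hre
  rw [abs_le] at harg
  have hp := Real.pi_pos
  have h1 : arg ζ * δ < Real.pi := by nlinarith [harg.1, harg.2]
  have h2 : -Real.pi < arg ζ * δ := by nlinarith [harg.1, harg.2]
  rw [mem_slitPlane_iff_arg]
  refine ⟨?_, by simp [cpow_eq_zero_iff, h0]⟩
  rw [cpow_def_of_ne_zero h0, ← Complex.log_im, Complex.log_exp]
  · simp [Complex.log_im]; exact h1.ne
  · simpa [Complex.log_im] using h2
  · simpa [Complex.log_im] using h1.le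

lemma one_add_slit {w : ℂ} (hw : w ∈ slitPlane) : 1 + w ∈ slitPlane := by
  rw [mem_slitPlane_iff] at *
  simp
  rcases hw with h | h
  · left; linarith
  · right; exact h

lemma inv_slit {w : ℂ} (hw : w ∈ slitPlane) : w⁻¹ ∈ slitPlane := by
  have h0 := slitPlane_ne_zero hw
  have hn : 0 < normSq w := normSq_pos.2 h0
  rw [mem_slitPlane_iff] at *
  rw [inv_re, inv_im]
  rcases hw with h | h
  · left; positivity
  · right; exact div_ne_zero (neg_ne_zero.2 h) hn.ne'

lemma quot_eq {w : ℂ} (hw : w ∈ slitPlane) : w / (1 + w) = (1 + w⁻¹)⁻¹ := by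
  have h0 := slitPlane_ne_zero hw
  have h1 := slitPlane_ne_zero (one_add_slit hw)
  have h2 := slitPlane_ne_zero (one_add_slit (inv_slit hw))
  rw [eq_comm, inv_eq_iff_eq_inv, inv_div]
  field_simp
  ring

lemma quot_slit {w : ℂ} (hw : w ∈ slitPlane) : w / (1 + w) ∈ slitPlane := by
  rw [quot_eq hw]; exact inv_slit (one_add_slit (inv_slit hw))

lemma F_diff {lam δ : ℝ} (hδ0 : 0 < δ) (hδ2 : δ < 2) {ζ : ℂ} (h0 : ζ ≠ 0) (hre : 0 ≤ ζ.re) :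
    DifferentiableAt ℂ (F lam δ) ζ := by
  have hs := cpow_slit hδ0 hδ2 h0 hre
  have hd : DifferentiableAt ℂ (fun ζ : ℂ => ζ ^ (δ : ℂ)) ζ :=
    differentiableAt_id.cpow_const (slit_of_re h0 hre)
  have hq : DifferentiableAt ℂ (fun ζ : ℂ => ζ ^ (δ : ℂ) / (1 + ζ ^ (δ : ℂ))) ζ :=
    hd.div (hd.const_add 1) (slitPlane_ne_zero (one_add_slit hs))
  exact differentiableAt_id.mul ((hq.cpow_const (quot_slit hs)).const_sub 1)

lemma F_cont {lam δ : ℝ} (hlam : 0 < lam) (hδ0 : 0 < δ) (hδ2 : δ < 2) {ζ : ℂ} (hre : 0 ≤ ζ.re) :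
    ContinuousAt (F lam δ) ζ := by
  by_cases h0 : ζ = 0
  · subst h0
    have hδc : (δ : ℂ) ≠ 0 := by exact_mod_cast hδ0.ne'
    have hd : ContinuousAt (fun ζ : ℂ => ζ ^ (δ : ℂ)) 0 :=
      continuousAt_cpow_const_of_re_pos (by simp) (by simpa)
    have hq : ContinuousAt (fun ζ : ℂ => ζ ^ (δ : ℂ) / (1 + ζ ^ (δ : ℂ))) 0 :=
      hd.div (continuousAt_const.add hd) (by simp [hδc])
    have hp : ContinuousAt (fun w : ℂ => w ^ (lam : ℂ))
        ((fun ζ : ℂ => ζ ^ (δ : ℂ) / (1 + ζ ^ (δ : ℂ))) 0) :=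
      continuousAt_cpow_const_of_re_pos (by simp [hδc]) (by simpa)
    exact continuousAt_id.mul (continuousAt_const.sub (ContinuousAt.comp (f := fun ζ : ℂ => ζ ^ (δ : ℂ) / (1 + ζ ^ (δ : ℂ))) hp hq))
  · exact (F_diff hδ0 hδ2 h0 hre).continuousAt

lemma F_small {lam δ : ℝ} (hδ1 : 1 < δ) (hδ2 : δ < 2) {ε : ℝ} (hε : 0 < ε) :
    ∃ R0 : ℝ, 0 < R0 ∧ ∀ ζ : ℂ, 0 ≤ ζ.re → R0 ≤ ‖ζ‖ → ‖F lam δ ζ‖ ≤ ε := by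
  have hδ0 : 0 < δ := by linarith
  have hg : DifferentiableAt ℂ (fun u : ℂ => 1 - ((1 + u)⁻¹) ^ (lam : ℂ)) 0 := by
    refine DifferentiableAt.const_sub (DifferentiableAt.cpow_const ?_ ?_) 1
    · exact (differentiableAt_id.const_add 1).inv (by simp)
    · simp
  have hO := hg.isBigO_sub
  simp only [add_zero, inv_one, one_cpow, sub_self, sub_zero] at hO
  obtain ⟨K, hK0, hK⟩ := hO.exists_pos
  rw [Asymptotics.isBigOWith_iff, Metric.eventually_nhds_iff] at hK
  obtain ⟨η, hη, hK⟩ := hK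
  have t1 : Tendsto (fun x : ℝ => x ^ (-δ)) atTop (𝓝 0) := tendsto_rpow_neg_atTop hδ0
  have t2 : Tendsto (fun x : ℝ => K * x ^ (-(δ - 1))) atTop (𝓝 (K * 0)) :=
    (tendsto_rpow_neg_atTop (by linarith)).const_mul K
  rw [mul_zero] at t2
  obtain ⟨R0, hR0⟩ := eventually_atTop.1 ((t1.eventually (gt_mem_nhds hη)).and
    ((t2.eventually (gt_mem_nhds hε)).and (eventually_gt_atTop 0)))
  refine ⟨max R0 1, by positivity, fun ζ hre hζ => ?_⟩
  obtain ⟨e1, e2, e3⟩ := hR0 ‖ζ‖ ((le_max_left _ _).trans hζ)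
  have h0 : ζ ≠ 0 := norm_pos_iff.1 e3
  have hs := cpow_slit hδ0 hδ2 h0 hre
  have hn : ‖(ζ ^ (δ : ℂ))⁻¹‖ = ‖ζ‖ ^ (-δ) := by
    rw [norm_inv, norm_cpow_real, Real.rpow_neg e3.le]
  have := @hK (ζ ^ (δ : ℂ))⁻¹ (by rw [dist_zero_right, hn]; exact e1)
  rw [F, quot_eq hs, norm_mul]
  rw [hn] at this
  refine le_trans (mul_le_mul_of_nonneg_left this e3.le) (le_trans (le_of_eq ?_) e2.le)
  rw [show -(δ - 1) = 1 + -δ by ring, Real.rpow_add e3, Real.rpow_one]; ring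

lemma F_real {lam δ : ℝ} {r : ℝ} (hr : 0 ≤ r) :
    F lam δ r = ((r * dagum lam δ r : ℝ) : ℂ) := by
  have : 0 ≤ r ^ δ := Real.rpow_nonneg hr _
  rw [F, dagum, ofReal_mul, ofReal_sub,
    ofReal_cpow (by positivity : 0 ≤ r ^ δ / (1 + r ^ δ))]
  push_cast
  rw [ofReal_cpow hr]

/-- Contour rotation. -/
lemma rotate {lam δ : ℝ} (hlam : 0 < lam) (hδ1 : 1 < δ) (hδ2 : δ < 2) {z : ℝ} (hz : 0 < z) :
    IntegrableOn (fun y : ℝ => F lam δ (y * I) * cexp (-(z * y : ℝ))) (Ioi 0) ∧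
    Tendsto (fun R : ℝ => ∫ x in (0 : ℝ)..R, F lam δ x * cexp (z * x * I)) atTop
      (𝓝 (I * ∫ y in Ioi (0 : ℝ), F lam δ (y * I) * cexp (-(z * y : ℝ)))) := by
  have hδ0 : 0 < δ := by linarith
  have hFI : Continuous (fun y : ℝ => F lam δ (y * I) * cexp (-(z * y : ℝ))) := by
    refine Continuous.mul ?_ (by fun_prop)
    rw [continuous_iff_continuousAt]
    intro y
    exact ContinuousAt.comp (f := fun y : ℝ => (y : ℂ) * I) (F_cont hlam hδ0 hδ2 (by simp))
      (by fun_prop)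
  have hFint : IntegrableOn (fun y : ℝ => F lam δ (y * I) * cexp (-(z * y : ℝ))) (Ioi 0) := by
    refine integrableOn_Ici_iff_integrableOn_Ioi (by finiteness) |>.mp <|
      (hFI.continuousOn.locallyIntegrableOn measurableSet_Ici).integrableOn_of_isBigO_atTop
        (g := fun y : ℝ => Real.exp (-z * y)) ?_
        ⟨Ioi 0, Ioi_mem_atTop 0, exp_neg_integrableOn_Ioi 0 hz⟩
    obtain ⟨R0, hR0, hF⟩ := F_small (lam := lam) hδ1 hδ2 one_pos
    refine Asymptotics.IsBigO.of_bound 1 ?_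
    filter_upwards [eventually_ge_atTop R0] with y hy
    rw [norm_mul]
    refine mul_le_mul (hF _ (by simp) ?_) (le_of_eq ?_) (norm_nonneg _) zero_le_one
    · simpa [abs_of_pos (hR0.trans_le hy)] using hy
    · rw [norm_exp, Real.norm_eq_abs, abs_of_pos (Real.exp_pos _)]
      congr 1; simp
  refine ⟨hFint, ?_⟩
  have hleft := (intervalIntegral_tendsto_integral_Ioi 0 hFint tendsto_id).const_mul I
  simp only [id] at hleft
  -- the two other sides
  set top : ℝ → ℂ := fun R => ∫ x in (0 : ℝ)..R, F lam δ (x + R * I) * cexp (z * (x + R * I) * I)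
    with htop
  set right : ℝ → ℂ := fun R => ∫ y in (0 : ℝ)..R, F lam δ (R + y * I) * cexp (z * (R + y * I) * I)
    with hright
  have hcauchy : ∀ R : ℝ, 0 < R → (∫ x in (0 : ℝ)..R, F lam δ x * cexp (z * x * I)) =
      I * (∫ y in (0 : ℝ)..R, F lam δ (y * I) * cexp (-(z * y : ℝ))) + top R - I * right R := by
    intro R hR
    have := integral_boundary_rect_eq_zero_of_continuousOn_of_differentiableOn
      (fun ζ => F lam δ ζ * cexp (z * ζ * I)) 0 (R + R * I) ?_ ?_
    · simp at this
      have h1 : (∫ y in (0 : ℝ)..R, F lam δ (y * I) * cexp (z * (y * I) * I)) =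
          ∫ y in (0 : ℝ)..R, F lam δ (y * I) * cexp (-(z * y : ℝ)) := by
        congr 1; ext y; congr 2
        push_cast
        linear_combination (z * y : ℂ) * I_mul_I
      rw [h1] at this
      linear_combination this
    · intro ζ hζ
      simp [mem_reProdIm, uIcc_of_le hR.le] at hζ
      exact ((F_cont hlam hδ0 hδ2 hζ.1.1).mul (by fun_prop)).continuousWithinAt
    · intro ζ hζ
      simp [mem_reProdIm, hR.le] at hζ
      refine DifferentiableAt.differentiableWithinAt (DifferentiableAt.mul
        (F_diff hδ0 hδ2 ?_ hζ.1.1.le) (by fun_prop))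
      rintro rfl
      simp at hζ
  have htop0 : Tendsto top atTop (𝓝 0) := by
    have hlim : Tendsto (fun R : ℝ => R ^ (1 : ℝ) * Real.exp (-z * R)) atTop (𝓝 0) :=
      tendsto_rpow_mul_exp_neg_mul_atTop_nhds_zero 1 z hz
    refine squeeze_zero_norm' ?_ hlim
    obtain ⟨R0, hR0, hF⟩ := F_small (lam := lam) hδ1 hδ2 one_pos
    filter_upwards [eventually_ge_atTop R0] with R hR
    have hRp := hR0.trans_le hR
    have := norm_integral_le_of_norm_le_const (a := 0) (b := R) (C := Real.exp (-z * R))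
      (f := fun x : ℝ => F lam δ (x + R * I) * cexp (z * (x + R * I) * I)) ?_
    · refine this.trans (le_of_eq ?_)
      rw [sub_zero, abs_of_pos hRp, Real.rpow_one, mul_comm]
    · intro x hx
      rw [uIoc_of_le hRp.le] at hx
      rw [norm_mul, norm_exp]
      have e : (z * (x + R * I) * I : ℂ).re = -z * R := by simp
      rw [e]
      refine mul_le_of_le_one_left (Real.exp_pos _).le (hF _ (by simpa using hx.1.le) ?_)
      refine hR.trans ?_
      have := abs_im_le_norm (x + R * I : ℂ)
      simp at this
      exact (le_abs_self R).trans this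
  have hright0 : Tendsto right atTop (𝓝 0) := by
    rw [Metric.tendsto_atTop]
    intro ε hε
    obtain ⟨R0, hR0, hF⟩ := F_small (lam := lam) hδ1 hδ2 (show 0 < ε * z / 2 by positivity)
    refine ⟨R0, fun R hR => ?_⟩
    have hRp : 0 < R := hR0.trans_le hR
    rw [dist_zero_right]
    have hi : IntegrableOn (fun y : ℝ => ε * z / 2 * Real.exp (-z * y)) (Ioi 0) :=
      (exp_neg_integrableOn_Ioi 0 hz).const_mul _
    have hb : ‖right R‖ ≤ ∫ y in (0 : ℝ)..R, ε * z / 2 * Real.exp (-z * y) := by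
      refine intervalIntegral.norm_integral_le_of_norm_le hRp.le (ae_of_all _ fun y hy => ?_)
        (Continuous.intervalIntegrable (by fun_prop) _ _)
      rw [norm_mul, norm_exp]
      have e : (z * (R + y * I) * I : ℂ).re = -z * y := by simp
      rw [e]
      refine mul_le_mul_of_nonneg_right (hF _ (by simpa using hRp.le) ?_) (Real.exp_pos _).le
      refine hR.trans ?_
      have := abs_re_le_norm (R + y * I : ℂ)
      simp at this
      exact (le_abs_self R).trans this
    have hb2 : ∫ y in (0 : ℝ)..R, ε * z / 2 * Real.exp (-z * y) ≤
        ∫ y in Ioi (0 : ℝ), ε * z / 2 * Real.exp (-z * y) := by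
      rw [intervalIntegral.integral_of_le hRp.le]
      exact setIntegral_mono_set hi (ae_of_all _ fun y => by positivity)
        (ae_of_all _ fun y hy => hy.1)
    rw [MeasureTheory.integral_const_mul, integral_exp_mul_Ioi (by linarith)] at hb2
    have : ε * z / 2 * (-Real.exp (-z * 0) / -z) = ε / 2 := by
      simp; field_simp
    linarith
  have := (hleft.add htop0).sub (hright0.const_mul I)
  rw [mul_zero, sub_zero, add_zero] at this
  refine this.congr' ?_
  filter_upwards [eventually_gt_atTop 0] with R hR
  rw [hcauchy R hR]

lemma real_mul_cpow {x : ℝ} (hx : 0 < x) {q : ℂ} (hq : q ≠ 0) (s : ℂ) :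
    ((x : ℂ) * q) ^ s = (x : ℂ) ^ s * q ^ s := by
  have hx' : (x : ℂ) ≠ 0 := by exact_mod_cast hx.ne'
  rw [cpow_def_of_ne_zero (mul_ne_zero hx' hq), cpow_def_of_ne_zero hx', cpow_def_of_ne_zero hq,
    log_ofReal_mul hx hq, ← Complex.exp_add, ofReal_log hx.le]
  ring_nf

/-- Bounded profile on the imaginary axis. -/
noncomputable def H (lam δ : ℝ) (t : ℝ) : ℝ :=
  (((cexp (-((Real.pi * δ / 2 : ℝ) * I)) + t)⁻¹) ^ (lam : ℂ)).im

lemma k_im (δ : ℝ) : (cexp (-((Real.pi * δ / 2 : ℝ) * I))).im = - Real.sin (Real.pi * δ / 2) := by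
  rw [← neg_mul, ← ofReal_neg, exp_ofReal_mul_I_im, Real.sin_neg]

lemma sin_pos' {δ : ℝ} (hδ0 : 0 < δ) (hδ2 : δ < 2) : 0 < Real.sin (Real.pi * δ / 2) := by
  have := Real.pi_pos
  apply Real.sin_pos_of_pos_of_lt_pi <;> nlinarith

lemma k_norm {δ : ℝ} (hδ0 : 0 < δ) (hδ2 : δ < 2) (t : ℝ) :
    Real.sin (Real.pi * δ / 2) ≤ ‖cexp (-((Real.pi * δ / 2 : ℝ) * I)) + t‖ := by
  have := abs_im_le_norm (cexp (-((Real.pi * δ / 2 : ℝ) * I)) + t)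
  rw [add_im, k_im, ofReal_im, add_zero, abs_neg, abs_of_pos (sin_pos' hδ0 hδ2)] at this
  exact this

lemma k_ne {δ : ℝ} (hδ0 : 0 < δ) (hδ2 : δ < 2) (t : ℝ) :
    cexp (-((Real.pi * δ / 2 : ℝ) * I)) + t ≠ 0 :=
  norm_pos_iff.1 ((sin_pos' hδ0 hδ2).trans_le (k_norm hδ0 hδ2 t))

lemma k_slit {δ : ℝ} (hδ0 : 0 < δ) (hδ2 : δ < 2) (t : ℝ) :
    cexp (-((Real.pi * δ / 2 : ℝ) * I)) + t ∈ slitPlane := by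
  rw [mem_slitPlane_iff]
  right
  rw [add_im, k_im, ofReal_im, add_zero]
  exact neg_ne_zero.2 (sin_pos' hδ0 hδ2).ne'

lemma H_bound {lam δ : ℝ} (hlam : 0 < lam) (hδ0 : 0 < δ) (hδ2 : δ < 2) (t : ℝ) :
    |H lam δ t| ≤ (Real.sin (Real.pi * δ / 2))⁻¹ ^ lam := by
  refine (abs_im_le_norm _).trans ?_
  rw [norm_cpow_real, norm_inv]
  exact Real.rpow_le_rpow (by positivity)
    (inv_anti₀ (sin_pos' hδ0 hδ2) (k_norm hδ0 hδ2 t)) hlam.le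

lemma H_cont {lam δ : ℝ} (hδ0 : 0 < δ) (hδ2 : δ < 2) : Continuous (H lam δ) := by
  refine continuous_im.comp (continuous_iff_continuousAt.2 fun t => ?_)
  refine ContinuousAt.cpow ?_ continuousAt_const (inv_slit (k_slit hδ0 hδ2 t))
  exact ContinuousAt.inv₀ (by fun_prop) (k_ne hδ0 hδ2 t)

lemma H_zero {lam δ : ℝ} (hδ0 : 0 < δ) (hδ2 : δ < 2) :
    H lam δ 0 = Real.sin (Real.pi * (δ * lam) / 2) := by
  have := Real.pi_pos
  rw [H, ofReal_zero, add_zero, ← Complex.exp_neg, neg_neg, cpow_def_of_ne_zero (exp_ne_zero _),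
    Complex.log_exp]
  · rw [show ((Real.pi * δ / 2 : ℝ) * I * lam : ℂ) = ((Real.pi * (δ * lam) / 2 : ℝ) : ℂ) * I by
      push_cast; ring, exp_ofReal_mul_I_im]
  · simp; nlinarith
  · simp; nlinarith

lemma F_I {lam δ : ℝ} (hδ0 : 0 < δ) (hδ2 : δ < 2) {y : ℝ} (hy : 0 < y) :
    (F lam δ (y * I)).re = y ^ (1 + δ * lam) * H lam δ (y ^ δ) := by
  set k := cexp (-((Real.pi * δ / 2 : ℝ) * I)) with hk
  have hk0 : k ≠ 0 := exp_ne_zero _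
  have hkt := k_ne hδ0 hδ2 (y ^ δ)
  rw [← hk] at hkt
  have hIk : I ^ (δ : ℂ) = k⁻¹ := by
    rw [cpow_def_of_ne_zero I_ne_zero, log_I, hk, ← Complex.exp_neg]
    congr 1; push_cast; ring
  have hyd : 0 < y ^ δ := Real.rpow_pos_of_pos hy _
  have hw : ((y : ℂ) * I) ^ (δ : ℂ) = (y ^ δ : ℝ) * k⁻¹ := by
    rw [real_mul_cpow hy I_ne_zero, hIk, ofReal_cpow hy.le]
  have hq : ((y : ℂ) * I) ^ (δ : ℂ) / (1 + ((y : ℂ) * I) ^ (δ : ℂ)) =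
      (y ^ δ : ℝ) * (k + (y ^ δ : ℝ))⁻¹ := by
    rw [hw]
    have : 1 + (y ^ δ : ℝ) * k⁻¹ = (k + (y ^ δ : ℝ)) * k⁻¹ := by field_simp
    rw [this]
    field_simp
  rw [F, hq, real_mul_cpow hyd (inv_ne_zero hkt), ← ofReal_cpow hyd.le, ← Real.rpow_mul hy.le,
    Real.rpow_add hy, Real.rpow_one, H, ← hk]
  simp
  ring

lemma const_eq {a : ℝ} (ha0 : 0 < a) (ha2 : a < 2) :
    1 / (2 * Real.pi ^ 2) * (Real.Gamma (2 + a) * Real.sin (Real.pi * a / 2)) =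
      2 ^ (a - 1) * a * Real.Gamma ((3 + a) / 2) /
        (Real.pi ^ ((3 : ℝ) / 2) * Real.Gamma (1 - a / 2)) := by
  have hp := Real.pi_pos
  have hs : 0 < Real.sin (Real.pi * (a / 2)) := by
    apply Real.sin_pos_of_pos_of_lt_pi <;> nlinarith
  have h1 := Real.Gamma_mul_Gamma_one_sub (a / 2)
  have h2 := Real.Gamma_mul_Gamma_add_half (1 + a / 2)
  have h3 := Real.Gamma_add_one (s := a / 2) (by positivity)
  have g1 : 0 < Real.Gamma (a / 2) := Real.Gamma_pos_of_pos (by positivity)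
  have g2 : 0 < Real.Gamma (1 - a / 2) := Real.Gamma_pos_of_pos (by linarith)
  rw [show 1 + a / 2 + 1 / 2 = (3 + a) / 2 by ring, show 2 * (1 + a / 2) = 2 + a by ring,
    show 1 - (2 + a) = -(a - 1) - 2 by ring, add_comm 1 (a / 2), h3,
    Real.rpow_sub two_pos, Real.rpow_neg two_pos.le] at h2
  rw [show Real.pi * a / 2 = Real.pi * (a / 2) by ring]
  have h4 : Real.pi ^ ((3 : ℝ) / 2) = Real.pi * √Real.pi := by
    rw [show (3 : ℝ) / 2 = 1 + 1 / 2 by norm_num, Real.rpow_add hp, Real.rpow_one,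
      Real.sqrt_eq_rpow]
  have hsq : √Real.pi * √Real.pi = Real.pi := Real.mul_self_sqrt hp.le
  have hsp : 0 < √Real.pi := Real.sqrt_pos.2 hp
  have h2a : (0 : ℝ) < 2 ^ (a - 1) := by positivity
  rw [h4]
  set s := √Real.pi
  set p := Real.pi
  set P := (2 : ℝ) ^ (a - 1)
  set A := Real.Gamma (a / 2)
  set B := Real.Gamma (1 - a / 2)
  set C := Real.Gamma ((3 + a) / 2)
  set G := Real.Gamma (2 + a)
  set S := Real.sin (p * (a / 2))
  rw [show (2 : ℝ) ^ (2 : ℝ) = 4 by norm_num] at h2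
  have h1' : A * B * S = p := by rw [h1]; field_simp
  have h2' : G * s = 2 * a * P * A * C := by
    field_simp at h2
    linear_combination (-1 / 2) * h2
  rw [div_mul_eq_mul_div, one_mul, div_eq_div_iff (by positivity) (by positivity)]
  linear_combination (B * S * p) * h2' + (2 * a * P * C * p) * h1'

lemma rescaled_limit {lam δ : ℝ} (hlam : 0 < lam) (hδ0 : 0 < δ) (hδ2 : δ < 2) :
    Tendsto (fun z : ℝ => ∫ s in Ioi (0 : ℝ),
      s ^ (1 + δ * lam) * H lam δ ((z⁻¹ * s) ^ δ) * Real.exp (-s)) atTop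
      (𝓝 (Real.Gamma (2 + δ * lam) * Real.sin (Real.pi * (δ * lam) / 2))) := by
  have ha : 0 < δ * lam := by positivity
  have hΓ := Real.Gamma_eq_integral (s := 2 + δ * lam) (by positivity)
  have hI := Real.GammaIntegral_convergent (s := 2 + δ * lam) (by positivity)
  rw [show 2 + δ * lam - 1 = 1 + δ * lam by ring] at hΓ hI
  rw [hΓ, ← MeasureTheory.integral_mul_const]
  set K := (Real.sin (Real.pi * δ / 2))⁻¹ ^ lam
  refine MeasureTheory.tendsto_integral_filter_of_dominated_convergence
    (fun s => K * (Real.exp (-s) * s ^ (1 + δ * lam))) ?_ ?_ (hI.const_mul K) ?_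
  · refine Eventually.of_forall fun z => Measurable.aestronglyMeasurable ?_
    have := (H_cont (lam := lam) hδ0 hδ2).measurable
    fun_prop
  · refine Eventually.of_forall fun z => ?_
    filter_upwards [ae_restrict_mem measurableSet_Ioi] with s hs
    have hs' : 0 < s := hs
    have h1 : 0 < s ^ (1 + δ * lam) := Real.rpow_pos_of_pos hs' _
    rw [norm_mul, norm_mul, Real.norm_eq_abs, Real.norm_eq_abs, Real.norm_eq_abs,
      abs_of_pos h1, abs_of_pos (Real.exp_pos _)]
    have := mul_le_mul_of_nonneg_right (H_bound hlam hδ0 hδ2 ((z⁻¹ * s) ^ δ))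
      (by positivity : 0 ≤ Real.exp (-s) * s ^ (1 + δ * lam))
    refine le_trans (le_of_eq (by ring)) this
  · filter_upwards [ae_restrict_mem measurableSet_Ioi] with s hs
    have t1 : Tendsto (fun z : ℝ => (z⁻¹ * s) ^ δ) atTop (𝓝 0) := by
      have : Tendsto (fun z : ℝ => z⁻¹ * s) atTop (𝓝 (0 * s)) :=
        tendsto_inv_atTop_zero.mul_const s
      rw [zero_mul] at this
      have h2 := this.rpow_const (p := δ) (Or.inr hδ0.le)
      rwa [Real.zero_rpow hδ0.ne'] at h2
    have t2 := ((H_cont (lam := lam) hδ0 hδ2).tendsto 0).comp t1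
    rw [H_zero hδ0 hδ2] at t2
    have t3 := (t2.const_mul (s ^ (1 + δ * lam))).mul_const (Real.exp (-s))
    rw [show Real.exp (-s) * s ^ (1 + δ * lam) * Real.sin (Real.pi * (δ * lam) / 2) =
      s ^ (1 + δ * lam) * Real.sin (Real.pi * (δ * lam) / 2) * Real.exp (-s) by ring]
    exact t3

end DagumAux

open DagumAux

/-- High-frequency behaviour in dimension `d = 3` for `δ ∈ (1,2)`, `δλ ∈ (0,2)`:
the improper integral
`\widehat D_3(z) = (1/(2π²z)) lim_{T→∞} ∫₀^T r sin(zr) D_{λ,δ}(r) dr` exists for every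
`z > 0`, and `z^{3+δλ} \widehat D_3(z) → 2^{δλ-1} λ δ Γ((3+λδ)/2)/(π^{3/2} Γ(1-λδ/2))`
as `z → ∞`. -/
theorem dagum_high_frequency_dim_three (δ lam : ℝ) (hδ1 : 1 < δ) (hδ2 : δ < 2)
    (hlam : 0 < lam) (hdl0 : 0 < δ * lam) (hdl2 : δ * lam < 2) :
    ∃ Dh : ℝ → ℝ,
      (∀ z : ℝ, 0 < z →
        Tendsto (fun T : ℝ =>
            (1 / (2 * Real.pi ^ 2 * z)) * ∫ r in (0 : ℝ)..T, r * Real.sin (z * r) * dagum lam δ r)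
          atTop (nhds (Dh z))) ∧
      Tendsto (fun z : ℝ => z ^ (3 + δ * lam) * Dh z) atTop
        (nhds (2 ^ (δ * lam - 1) * lam * δ * Real.Gamma ((3 + lam * δ) / 2) /
          (Real.pi ^ ((3 : ℝ) / 2) * Real.Gamma (1 - lam * δ / 2)))) := by
  have hδ0 : 0 < δ := by linarith
  have hp := Real.pi_pos
  refine ⟨fun z => (1 / (2 * Real.pi ^ 2 * z)) * ∫ y in Ioi (0 : ℝ),
    y ^ (1 + δ * lam) * H lam δ (y ^ δ) * Real.exp (-(z * y)), fun z hz => ?_, ?_⟩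
  · refine Tendsto.const_mul _ ?_
    obtain ⟨hFint, hlim⟩ := rotate hlam hδ1 hδ2 hz
    have h := (Complex.continuous_im.tendsto _).comp hlim
    have e : (Complex.I * ∫ y in Ioi (0 : ℝ), F lam δ (y * Complex.I) *
        Complex.exp (-(z * y : ℝ))).im = ∫ y in Ioi (0 : ℝ),
          y ^ (1 + δ * lam) * H lam δ (y ^ δ) * Real.exp (-(z * y)) := by
      rw [Complex.I_mul_im, ← Complex.reCLM_apply, ← Complex.reCLM.integral_comp_comm hFint]
      refine setIntegral_congr_fun measurableSet_Ioi fun y hy => ?_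
      have : Complex.exp (-(z * y : ℝ)) = ((Real.exp (-(z * y)) : ℝ) : ℂ) := by
        push_cast; rfl
      simp only [Complex.reCLM_apply]
      rw [this, Complex.re_mul_ofReal, F_I hδ0 hδ2 hy]
    rw [e] at h
    refine h.congr' ?_
    filter_upwards [eventually_ge_atTop 0] with T hT
    simp only [Function.comp]
    rw [← Complex.imCLM_apply, ← Complex.imCLM.intervalIntegral_comp_comm]
    · refine intervalIntegral.integral_congr fun r hr => ?_
      rw [uIcc_of_le hT] at hr
      simp only [Complex.imCLM_apply]
      rw [F_real hr.1, Complex.im_ofReal_mul, ← Complex.ofReal_mul, Complex.exp_ofReal_mul_I_im]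
      ring
    · refine ContinuousOn.intervalIntegrable fun r hr => ?_
      rw [uIcc_of_le hT] at hr
      refine ContinuousAt.continuousWithinAt (ContinuousAt.mul ?_ (by fun_prop))
      exact ContinuousAt.comp (f := fun r : ℝ => (r : ℂ))
        (F_cont hlam hδ0 hδ2 (by simpa using hr.1)) (by fun_prop)
  · have hl := (rescaled_limit hlam hδ0 hδ2).const_mul (1 / (2 * Real.pi ^ 2))
    rw [const_eq hdl0 hdl2] at hl
    rw [show 2 ^ (δ * lam - 1) * lam * δ = 2 ^ (δ * lam - 1) * (δ * lam) by ring, mul_comm lam δ]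
    refine hl.congr' ?_
    filter_upwards [eventually_gt_atTop 0] with z hz
    have hsub := MeasureTheory.integral_comp_mul_left_Ioi (fun y : ℝ =>
      y ^ (1 + δ * lam) * H lam δ (y ^ δ) * Real.exp (-(z * y))) 0 (inv_pos.2 hz)
    rw [mul_zero, inv_inv, smul_eq_mul] at hsub
    have e2 : ∫ s in Ioi (0 : ℝ), (z⁻¹ * s) ^ (1 + δ * lam) * H lam δ ((z⁻¹ * s) ^ δ) *
          Real.exp (-(z * (z⁻¹ * s))) = (z ^ (1 + δ * lam))⁻¹ * ∫ s in Ioi (0 : ℝ),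
            s ^ (1 + δ * lam) * H lam δ ((z⁻¹ * s) ^ δ) * Real.exp (-s) := by
      rw [← MeasureTheory.integral_const_mul]
      refine setIntegral_congr_fun measurableSet_Ioi fun s hs => ?_
      rw [mul_inv_cancel_left₀ hz.ne', Real.mul_rpow (inv_pos.2 hz).le (le_of_lt hs) (z := 1 + δ * lam),
        Real.inv_rpow hz.le]
      ring
    rw [e2] at hsub
    have hz1 : 0 < z ^ (1 + δ * lam) := Real.rpow_pos_of_pos hz _
    have hz3 : z ^ (3 + δ * lam) = z ^ 2 * z ^ (1 + δ * lam) := by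
      rw [show 3 + δ * lam = 2 + (1 + δ * lam) by ring, Real.rpow_add hz, Real.rpow_two]
    rw [hz3]
    rw [inv_mul_eq_iff_eq_mul₀ hz1.ne'] at hsub
    rw [hsub]
    field_simp
end

section
/- Let d ≥ 1 be an integer, λ > 0, and δ > d. Then x ↦ D_{λ,δ}(‖x‖) is integrable on ℝ^d and ∫_{ℝ^d} D_{λ,δ}(‖x‖) dx = π^{d/2} Γ(1 − d/δ) Γ(d/δ + λ) / ( Γ(1 + d/2) Γ(λ) ). -/
open MeasureTheory

lemma dagum_nonneg_le (lam δ r : ℝ) (hlam : 0 < lam) (hr : 0 ≤ r) :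
    0 ≤ dagum lam δ r ∧ dagum lam δ r ≤ 1 := by
  have h0 : 0 ≤ r ^ δ := Real.rpow_nonneg hr _
  have h1 : 0 ≤ r ^ δ / (1 + r ^ δ) := by positivity
  have h2 : r ^ δ / (1 + r ^ δ) ≤ 1 := by
    rw [div_le_one (by positivity)]; linarith
  have h3 := Real.rpow_le_one h1 h2 hlam.le
  have h4 := Real.rpow_nonneg h1 lam
  unfold dagum
  constructor <;> linarith

lemma dagum_superlevel (lam δ r u : ℝ) (hlam : 0 < lam) (hδ : 0 < δ) (hr : 0 ≤ r)
    (hu0 : 0 < u) (hu1 : u < 1) :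
    1 - u ^ lam < dagum lam δ r ↔ r < (u / (1 - u)) ^ δ⁻¹ := by
  have h0 : 0 ≤ r ^ δ := Real.rpow_nonneg hr _
  have h1 : 0 ≤ r ^ δ / (1 + r ^ δ) := by positivity
  have h2 : 0 < 1 - u := by linarith
  unfold dagum
  rw [sub_lt_sub_iff_left, Real.rpow_lt_rpow_iff h1 hu0.le hlam,
    Real.lt_rpow_inv_iff_of_pos hr (by positivity) hδ, div_lt_iff₀ (by positivity),
    lt_div_iff₀ h2]
  constructor <;> intro h <;> nlinarith

lemma lintegral_beta_aux (a b : ℝ) (ha : 0 < a) (hb : 0 < b) :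
    ∫⁻ x in Set.Ioo (0:ℝ) 1, ENNReal.ofReal (x ^ (a - 1) * (1 - x) ^ (b - 1))
      = ENNReal.ofReal (ProbabilityTheory.beta a b) := by
  have h := ProbabilityTheory.lintegral_betaPDF_eq_one ha hb
  have hp := ProbabilityTheory.beta_pos ha hb
  rw [ProbabilityTheory.lintegral_betaPDF] at h
  rw [← mul_one (ENNReal.ofReal (ProbabilityTheory.beta a b)), ← h,
    ← lintegral_const_mul' _ _ ENNReal.ofReal_ne_top]
  refine lintegral_congr fun x => ?_
  rw [← ENNReal.ofReal_mul hp.le]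
  congr 1
  field_simp

lemma image_aux (lam : ℝ) (hlam : 0 < lam) :
    (fun u : ℝ => 1 - u ^ lam) '' Set.Ioo 0 1 = Set.Ioo 0 1 := by
  ext t
  constructor
  · rintro ⟨u, ⟨h0, h1⟩, rfl⟩
    have := Real.rpow_pos_of_pos h0 lam
    have := Real.rpow_lt_one h0.le h1 hlam
    constructor <;> dsimp only <;> linarith
  · rintro ⟨h0, h1⟩
    have h2 : 0 < 1 - t := by linarith
    refine ⟨(1 - t) ^ lam⁻¹, ⟨Real.rpow_pos_of_pos h2 _,
      Real.rpow_lt_one h2.le (by linarith) (by positivity)⟩, ?_⟩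
    dsimp only
    rw [Real.rpow_inv_rpow h2.le hlam.ne']
    ring

lemma dagum_lintegral (d : ℕ) (hd : 1 ≤ d) (lam δ : ℝ) (hlam : 0 < lam)
    (hδ : (d : ℝ) < δ) :
    ∫⁻ x : EuclideanSpace ℝ (Fin d), ENNReal.ofReal (dagum lam δ ‖x‖)
      = ENNReal.ofReal (Real.pi ^ ((d : ℝ) / 2) * Real.Gamma (1 - d / δ) *
        Real.Gamma (d / δ + lam) / (Real.Gamma (1 + d / 2) * Real.Gamma lam)) := by
  have hd0 : (0:ℝ) < d := by exact_mod_cast hd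
  have hδ0 : 0 < δ := hd0.trans hδ
  have ha : (d:ℝ) / δ < 1 := (div_lt_one hδ0).2 hδ
  have ha0 : 0 < (d:ℝ) / δ := by positivity
  have : Nonempty (Fin d) := ⟨⟨0, hd⟩⟩
  set C : ℝ := √Real.pi ^ d / Real.Gamma (d / 2 + 1) with hC
  have hG : 0 < Real.Gamma ((d:ℝ) / 2 + 1) := Real.Gamma_pos_of_pos (by positivity)
  have hC0 : 0 ≤ C := by positivity
  rw [lintegral_eq_lintegral_meas_lt _
    (Filter.Eventually.of_forall fun x => (dagum_nonneg_le lam δ _ hlam (norm_nonneg x)).1)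
    (by unfold dagum; fun_prop)]
  have hsplit : ∫⁻ t in Set.Ioi (0:ℝ),
        volume {x : EuclideanSpace ℝ (Fin d) | t < dagum lam δ ‖x‖}
      = ∫⁻ t in Set.Ioo (0:ℝ) 1,
        volume {x : EuclideanSpace ℝ (Fin d) | t < dagum lam δ ‖x‖} := by
    rw [← Set.Ioo_union_Ici_eq_Ioi (zero_lt_one' ℝ),
      lintegral_union measurableSet_Ici
        (Set.disjoint_left.2 fun t h1 h2 => not_le.2 h1.2 h2)]
    rw [setLIntegral_eq_zero measurableSet_Ici, add_zero]
    intro t ht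
    change volume {x : EuclideanSpace ℝ (Fin d) | t < dagum lam δ ‖x‖} = 0
    convert measure_empty (μ := volume)
    ext x
    simp only [Set.mem_ofPred_eq, Set.mem_empty_iff_false, iff_false, not_lt]
    exact (dagum_nonneg_le lam δ _ hlam (norm_nonneg x)).2.trans ht
  rw [hsplit]
  conv_lhs => rw [← image_aux lam hlam]
  rw [lintegral_image_eq_lintegral_abs_deriv_mul measurableSet_Ioo
    (f' := fun u => -(lam * u ^ (lam - 1)))]
  · have key : ∀ u ∈ Set.Ioo (0:ℝ) 1, ENNReal.ofReal |-(lam * u ^ (lam - 1))| *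
        volume {x : EuclideanSpace ℝ (Fin d) | 1 - u ^ lam < dagum lam δ ‖x‖}
        = ENNReal.ofReal (lam * C) *
          ENNReal.ofReal (u ^ ((d / δ + lam) - 1) * (1 - u) ^ ((1 - d / δ) - 1)) := by
      rintro u ⟨h0, h1⟩
      have h2 : 0 < 1 - u := by linarith
      have hball : {x : EuclideanSpace ℝ (Fin d) | 1 - u ^ lam < dagum lam δ ‖x‖}
          = Metric.ball 0 ((u / (1 - u)) ^ δ⁻¹) := by
        ext x
        simp only [Set.mem_ofPred_eq, mem_ball_zero_iff]
        exact dagum_superlevel lam δ _ u hlam hδ0 (norm_nonneg x) h0 h1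
      have hp : 0 ≤ (u / (1 - u)) ^ δ⁻¹ := by positivity
      rw [hball, EuclideanSpace.volume_ball, Fintype.card_fin, ← hC, ← ENNReal.ofReal_pow hp,
        ← ENNReal.ofReal_mul (by positivity), ← ENNReal.ofReal_mul (by positivity),
        ← ENNReal.ofReal_mul (by positivity)]
      congr 1
      rw [abs_neg, abs_of_nonneg (by positivity), ← Real.rpow_natCast ((u / (1 - u)) ^ δ⁻¹) d,
        ← Real.rpow_mul (by positivity), Real.div_rpow h0.le h2.le,
        show (d / δ + lam) - 1 = (lam - 1) + δ⁻¹ * d by field_simp; ring,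
        show (1 - d / δ) - 1 = -(δ⁻¹ * d) by field_simp; ring,
        Real.rpow_add h0, Real.rpow_neg h2.le]
      ring
    rw [setLIntegral_congr_fun measurableSet_Ioo key,
      lintegral_const_mul' _ _ ENNReal.ofReal_ne_top,
      lintegral_beta_aux _ _ (by positivity) (by linarith),
      ← ENNReal.ofReal_mul (by positivity)]
    congr 1
    have hGl := Real.Gamma_pos_of_pos hlam
    have hs : √Real.pi ^ d = Real.pi ^ ((d:ℝ) / 2) := by
      rw [Real.sqrt_eq_rpow, ← Real.rpow_natCast, ← Real.rpow_mul Real.pi_pos.le]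
      congr 1
      ring
    rw [ProbabilityTheory.beta, show d / δ + lam + (1 - d / δ) = lam + 1 by ring,
      Real.Gamma_add_one hlam.ne', hC, hs, add_comm (1:ℝ) (d / 2)]
    field_simp
  · intro u hu
    have := (Real.hasDerivAt_rpow_const (p := lam) (Or.inl hu.1.ne')).const_sub 1
    exact this.hasDerivWithinAt
  · intro u hu v hv huv
    have h : u ^ lam = v ^ lam := by
      dsimp only at huv
      linarith
    exact (Real.rpow_left_inj hu.1.le hv.1.le hlam.ne').1 h

/-- For `δ > d`, the radial Dagum function is integrable on `ℝ^d` and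
`∫_{ℝ^d} D_{λ,δ}(‖x‖) dx = π^{d/2} Γ(1 - d/δ) Γ(d/δ + λ) / (Γ(1 + d/2) Γ(λ))`. -/
theorem dagum_integral_eval (d : ℕ) (hd : 1 ≤ d) (lam δ : ℝ) (hlam : 0 < lam)
    (hδ : (d : ℝ) < δ) :
    Integrable (fun x : EuclideanSpace ℝ (Fin d) => dagum lam δ ‖x‖) ∧
    ∫ x : EuclideanSpace ℝ (Fin d), dagum lam δ ‖x‖
      = Real.pi ^ ((d : ℝ) / 2) * Real.Gamma (1 - d / δ) * Real.Gamma (d / δ + lam) /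
        (Real.Gamma (1 + d / 2) * Real.Gamma lam) := by
  have hL := dagum_lintegral d hd lam δ hlam hδ
  have hd0 : (0:ℝ) < d := by exact_mod_cast hd
  have hδ0 : 0 < δ := hd0.trans hδ
  have ha : (d:ℝ) / δ < 1 := (div_lt_one hδ0).2 hδ
  have hm : Measurable (fun x : EuclideanSpace ℝ (Fin d) => dagum lam δ ‖x‖) := by
    unfold dagum; fun_prop
  have hnn : 0 ≤ᵐ[volume] (fun x : EuclideanSpace ℝ (Fin d) => dagum lam δ ‖x‖) :=
    Filter.Eventually.of_forall fun x => (dagum_nonneg_le lam δ _ hlam (norm_nonneg x)).1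
  constructor
  · refine ⟨hm.aestronglyMeasurable, ?_⟩
    rw [hasFiniteIntegral_iff_ofReal hnn, hL]
    exact ENNReal.ofReal_lt_top
  · rw [integral_eq_lintegral_of_nonneg_ae hnn hm.aestronglyMeasurable, hL,
      ENNReal.toReal_ofReal]
    have h1 := Real.Gamma_pos_of_pos (show 0 < 1 - (d:ℝ) / δ by linarith)
    have h2 := Real.Gamma_pos_of_pos (show 0 < (d:ℝ) / δ + lam by positivity)
    have h3 := Real.Gamma_pos_of_pos (show 0 < 1 + (d:ℝ) / 2 by positivity)
    have h4 := Real.Gamma_pos_of_pos hlam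
    positivity
end

section
/- Let s ∈ (0,1) and λ > 0. Then the integral ∫₀^∞ u^{s−1} ( 1 − (u/(1+u))^{λ} ) du converges and equals Γ(1−s) Γ(s+λ) / ( s Γ(λ) ). -/
open MeasureTheory Set

lemma dagum_beta_aux (a b : ℝ) (ha : 0 < a) (hb : 0 < b) :
    IntegrableOn (fun t : ℝ => t ^ (a - 1) * (1 - t) ^ (b - 1)) (Ioo 0 1) ∧
    ∫ t in Ioo (0 : ℝ) 1, t ^ (a - 1) * (1 - t) ^ (b - 1)
      = Real.Gamma a * Real.Gamma b / Real.Gamma (a + b) := by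
  have hconv := Complex.betaIntegral_convergent (u := a) (v := b) (by simpa) (by simpa)
  rw [intervalIntegrable_iff_integrableOn_Ioc_of_le (by simp)] at hconv
  have hre : ∀ x ∈ Ioc (0 : ℝ) 1,
      RCLike.re ((x : ℂ) ^ ((a : ℂ) - 1) * (1 - (x : ℂ)) ^ ((b : ℂ) - 1))
        = x ^ (a - 1) * (1 - x) ^ (b - 1) := by
    rintro x ⟨hx1, hx₂⟩
    norm_cast
    rw [← Complex.ofReal_cpow, ← Complex.ofReal_cpow, RCLike.re_to_complex,
        Complex.re_mul_ofReal, Complex.ofReal_re]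
    all_goals linarith
  have hint : IntegrableOn (fun t : ℝ => t ^ (a - 1) * (1 - t) ^ (b - 1)) (Ioc 0 1) :=
    IntegrableOn.congr_fun (Integrable.re hconv) hre measurableSet_Ioc
  refine ⟨hint.mono_set Ioo_subset_Ioc_self, ?_⟩
  have h := ProbabilityTheory.beta_eq_betaIntegralReal a b ha hb
  rw [ProbabilityTheory.beta] at h
  rw [h, Complex.betaIntegral, intervalIntegral.integral_of_le (by norm_num),
      ← integral_Ioc_eq_integral_Ioo, ← RCLike.re_to_complex, ← integral_re hconv]
  exact (setIntegral_congr_fun measurableSet_Ioc hre).symm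

lemma dagum_image : (fun u : ℝ => u / (1 + u)) '' Ioi 0 = Ioo 0 1 := by
  ext t
  simp only [mem_image, mem_Ioi, mem_Ioo]
  constructor
  · rintro ⟨u, hu, rfl⟩
    exact ⟨by positivity, by rw [div_lt_one (by positivity)]; linarith⟩
  · rintro ⟨h0, h1⟩
    have : 0 < 1 - t := by linarith
    refine ⟨t / (1 - t), by positivity, ?_⟩
    field_simp
    ring

lemma dagum_deriv (u : ℝ) (hu : 0 < u) :
    HasDerivAt (fun u : ℝ => u / (1 + u)) (1 / (1 + u) ^ 2) u := by
  have h := (hasDerivAt_id u).div ((hasDerivAt_id u).const_add 1) (by simp; positivity)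
  exact h.congr_deriv (by simp)

lemma dagum_G (s lam : ℝ) (hs0 : 0 < s) (hs1 : s < 1) (hlam : 0 < lam) :
    IntegrableOn (fun u : ℝ => u ^ s * (lam * (u / (1 + u)) ^ (lam - 1) * (1 / (1 + u) ^ 2)))
      (Ioi 0) ∧
    ∫ u in Ioi (0 : ℝ), u ^ s * (lam * (u / (1 + u)) ^ (lam - 1) * (1 / (1 + u) ^ 2))
      = Real.Gamma (1 - s) * Real.Gamma (s + lam) / Real.Gamma lam := by
  obtain ⟨h1, h2⟩ := dagum_beta_aux (s + lam) (1 - s) (by linarith) (by linarith)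
  have hd : ∀ x ∈ Ioi (0 : ℝ), HasDerivWithinAt (fun u : ℝ => u / (1 + u))
      (1 / (1 + x) ^ 2) (Ioi 0) x := fun x hx => (dagum_deriv x hx).hasDerivWithinAt
  have hinj : InjOn (fun u : ℝ => u / (1 + u)) (Ioi 0) := by
    intro x hx y hy h
    simp only [mem_Ioi] at hx hy h
    rw [div_eq_div_iff (by positivity) (by positivity)] at h
    linarith
  rw [← dagum_image, integrableOn_image_iff_integrableOn_abs_deriv_smul measurableSet_Ioi hd hinj]
    at h1
  rw [← dagum_image, integral_image_eq_integral_abs_deriv_smul measurableSet_Ioi hd hinj] at h2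
  have key : ∀ u ∈ Ioi (0 : ℝ), lam * (|1 / (1 + u) ^ 2| •
      ((u / (1 + u)) ^ (s + lam - 1) * (1 - u / (1 + u)) ^ (1 - s - 1)))
      = u ^ s * (lam * (u / (1 + u)) ^ (lam - 1) * (1 / (1 + u) ^ 2)) := by
    intro u hu
    simp only [mem_Ioi] at hu
    have e1 : 1 - u / (1 + u) = (1 + u)⁻¹ := by field_simp; ring
    have hx : 0 < u / (1 + u) := by positivity
    have hw : 0 < 1 + u := by positivity
    rw [abs_of_pos (by positivity), e1, show s + lam - 1 = s + (lam - 1) by ring,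
      Real.rpow_add hx, show 1 - s - 1 = -s by ring, Real.inv_rpow hw.le, Real.rpow_neg hw.le,
      inv_inv, Real.div_rpow hu.le hw.le s, smul_eq_mul]
    have : (1 + u) ^ s ≠ 0 := (Real.rpow_pos_of_pos hw s).ne'
    field_simp
  refine ⟨IntegrableOn.congr_fun (Integrable.const_mul h1 lam) key measurableSet_Ioi, ?_⟩
  rw [← setIntegral_congr_fun measurableSet_Ioi key, integral_const_mul, h2,
    show s + lam + (1 - s) = lam + 1 by ring, Real.Gamma_add_one hlam.ne']
  have := (Real.Gamma_pos_of_pos hlam).ne'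
  field_simp

lemma dagum_bound (lam : ℝ) (hlam : 0 < lam) (u : ℝ) (hu : 0 < u) :
    0 ≤ 1 - (u / (1 + u)) ^ lam ∧ 1 - (u / (1 + u)) ^ lam ≤ 1 ∧
    1 - (u / (1 + u)) ^ lam ≤ (1 + lam) * u ^ (-1 : ℝ) := by
  have hx : 0 < u / (1 + u) := by positivity
  have hx1 : u / (1 + u) ≤ 1 := by rw [div_le_one (by positivity)]; linarith
  have e1 : 1 - u / (1 + u) = (1 + u)⁻¹ := by field_simp; ring
  have hi : (1 + u)⁻¹ ≤ u⁻¹ := inv_anti₀ hu (by linarith)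
  have hp : 0 < (1 + u)⁻¹ := by positivity
  refine ⟨by linarith [Real.rpow_le_one hx.le hx1 hlam.le],
    by linarith [Real.rpow_pos_of_pos hx lam], ?_⟩
  rw [Real.rpow_neg_one]
  rcases le_total 1 lam with h | h
  · have := one_add_mul_self_le_rpow_one_add (s := u / (1 + u) - 1) (by linarith) h
    rw [show 1 + (u / (1 + u) - 1) = u / (1 + u) by ring] at this
    nlinarith
  · have := Real.rpow_le_rpow_of_exponent_ge hx hx1 h
    rw [Real.rpow_one] at this
    nlinarith

lemma dagum_integrable (s lam : ℝ) (hs0 : 0 < s) (hs1 : s < 1) (hlam : 0 < lam) :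
    IntegrableOn (fun u : ℝ => u ^ (s - 1) * (1 - (u / (1 + u)) ^ lam)) (Ioi 0) := by
  have hm : Measurable (fun u : ℝ => u ^ (s - 1) * (1 - (u / (1 + u)) ^ lam)) := by fun_prop
  rw [← Ioc_union_Ioi_eq_Ioi (zero_le_one (α := ℝ))]
  refine IntegrableOn.union ?_ ?_
  · have h := intervalIntegral.intervalIntegrable_rpow' (a := 0) (b := 1) (r := s - 1) (by linarith)
    rw [intervalIntegrable_iff_integrableOn_Ioc_of_le (by simp)] at h
    refine Integrable.mono' h hm.aestronglyMeasurable ?_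
    refine ae_restrict_of_forall_mem measurableSet_Ioc fun u hu => ?_
    obtain ⟨b1, b2, b3⟩ := dagum_bound lam hlam u hu.1
    have := Real.rpow_pos_of_pos hu.1 (s - 1)
    rw [Real.norm_of_nonneg (by positivity)]
    nlinarith
  · have h := (integrableOn_Ioi_rpow_of_lt (a := s - 2) (c := 1) (by linarith) one_pos)
    refine Integrable.mono' (Integrable.const_mul h (1 + lam)) hm.aestronglyMeasurable ?_
    refine ae_restrict_of_forall_mem measurableSet_Ioi fun u hu => ?_
    have hu0 : 0 < u := lt_trans one_pos hu
    obtain ⟨b1, b2, b3⟩ := dagum_bound lam hlam u hu0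
    have := Real.rpow_pos_of_pos hu0 (s - 1)
    rw [Real.norm_of_nonneg (by positivity), show s - 2 = (s - 1) + (-1) by ring,
      Real.rpow_add hu0]
    calc _ ≤ u ^ (s - 1) * ((1 + lam) * u ^ (-1 : ℝ)) := by gcongr
      _ = _ := by ring

/-- For `s ∈ (0,1)` and `λ > 0`, the integral
`∫₀^∞ u^{s-1} (1 - (u/(1+u))^λ) du` converges and equals
`Γ(1-s) Γ(s+λ) / (s Γ(λ))`. -/
theorem integral_dagum_mellin (s lam : ℝ) (hs0 : 0 < s) (hs1 : s < 1) (hlam : 0 < lam) :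
    IntegrableOn (fun u : ℝ => u ^ (s - 1) * (1 - (u / (1 + u)) ^ lam)) (Ioi 0) ∧
    ∫ u in Ioi (0 : ℝ), u ^ (s - 1) * (1 - (u / (1 + u)) ^ lam)
      = Real.Gamma (1 - s) * Real.Gamma (s + lam) / (s * Real.Gamma lam) := by
  have hI := dagum_integrable s lam hs0 hs1 hlam
  obtain ⟨hG, hGv⟩ := dagum_G s lam hs0 hs1 hlam
  refine ⟨hI, ?_⟩
  have hF := integral_Ioi_of_hasDerivAt_of_tendsto (a := 0) (m := 0)
    (f := fun u : ℝ => u ^ s * (1 - (u / (1 + u)) ^ lam))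
    (f' := fun u : ℝ => s * (u ^ (s - 1) * (1 - (u / (1 + u)) ^ lam)) -
      u ^ s * (lam * (u / (1 + u)) ^ (lam - 1) * (1 / (1 + u) ^ 2))) ?_ ?_ ?_ ?_
  · rw [integral_sub (Integrable.const_mul hI s) hG, integral_const_mul, hGv,
      Real.zero_rpow hs0.ne'] at hF
    rw [mul_comm s, ← div_div, eq_div_iff hs0.ne']
    have := (Real.Gamma_pos_of_pos hlam).ne'
    linarith
  · apply ContinuousAt.continuousWithinAt
    refine ContinuousAt.mul (Real.continuousAt_rpow_const _ _ (Or.inr hs0.le)) ?_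
    refine continuousAt_const.sub (ContinuousAt.rpow_const ?_ (Or.inr hlam.le))
    exact continuousAt_id.div (by fun_prop) (by norm_num)
  · intro u hu
    simp only [mem_Ioi] at hu
    have hx : u / (1 + u) ≠ 0 := by positivity
    have h1 := Real.hasDerivAt_rpow_const (x := u) (p := s) (Or.inl hu.ne')
    have h2 := ((dagum_deriv u hu).rpow_const (p := lam) (Or.inl hx)).const_sub 1
    exact (h1.mul h2).congr_deriv (by ring)
  · exact Integrable.sub (Integrable.const_mul hI s) hG
  · have ht : Filter.Tendsto (fun u : ℝ => (1 + lam) * u ^ (-(1 - s))) Filter.atTop (nhds 0) := by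
      simpa using (tendsto_rpow_neg_atTop (y := 1 - s) (by linarith)).const_mul (1 + lam)
    refine tendsto_of_tendsto_of_tendsto_of_le_of_le' tendsto_const_nhds ht ?_ ?_
    · filter_upwards [Filter.Ioi_mem_atTop 0] with u hu
      exact mul_nonneg (Real.rpow_nonneg (le_of_lt hu) _) (dagum_bound lam hlam u hu).1
    · filter_upwards [Filter.Ioi_mem_atTop 0] with u hu
      have hu0 : 0 < u := hu
      have := (dagum_bound lam hlam u hu).2.2
      rw [show -(1 - s) = s + (-1) by ring, Real.rpow_add hu0]
      calc _ ≤ u ^ s * ((1 + lam) * u ^ (-1 : ℝ)) := by gcongr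
        _ = _ := by ring
end

section
/- Let λ > 0, x > 0, and c ∈ (−λ, 0). Then the function t ↦ x^{c+it} Γ(−(c+it)) Γ(λ + c + it) is Lebesgue integrable on ℝ and (1/(2π)) ∫_{−∞}^{∞} x^{c+it} Γ(−(c+it)) Γ(λ+c+it) dt = Γ(λ) (1+x)^{−λ}. (Mellin–Barnes representation of (1+x)^{−λ}: the contour is the vertical line Re u = c separating the poles of Γ(−u) from those of Γ(λ+u).) -/
open MeasureTheory

namespace MBAux

/-- `‖Γ(s)‖ ≤ Γ(Re s)` for `Re s > 0`. -/
lemma norm_Gamma_le {s : ℂ} (hs : 0 < s.re) : ‖Complex.Gamma s‖ ≤ Real.Gamma s.re := by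
  rw [Complex.Gamma_eq_integral hs, Real.Gamma_eq_integral hs, Complex.GammaIntegral]
  refine (norm_integral_le_integral_norm _).trans (le_of_eq ?_)
  refine setIntegral_congr_fun measurableSet_Ioi fun x hx => ?_
  rw [norm_mul, Complex.norm_of_nonneg (Real.exp_pos _).le,
    Complex.norm_cpow_eq_rpow_re_of_pos hx]
  simp

lemma norm_Gamma_le' {s : ℂ} {m : ℝ} (hm : 0 < m) (hm1 : m ≤ 1) (hs : m ≤ s.re) :
    ‖Complex.Gamma s‖ ≤ Real.Gamma (s.re + 1) / (m * √(1 + s.im ^ 2)) := by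
  have hs0 : s ≠ 0 := by
    rintro rfl
    simp at hs; linarith
  have h1 := Complex.Gamma_add_one s hs0
  have h2 : ‖Complex.Gamma (s + 1)‖ ≤ Real.Gamma (s.re + 1) := by
    have := norm_Gamma_le (s := s + 1) (by simp; linarith)
    simpa using this
  rw [h1, norm_mul] at h2
  have h3 : m * √(1 + s.im ^ 2) ≤ ‖s‖ := by
    rw [Complex.norm_eq_sqrt_sq_add_sq, ← Real.sqrt_sq hm.le, ← Real.sqrt_mul (sq_nonneg m)]
    apply Real.sqrt_le_sqrt
    have h4 : m ^ 2 ≤ s.re ^ 2 := by gcongr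
    have h5 : m ^ 2 * s.im ^ 2 ≤ 1 * s.im ^ 2 := by
      gcongr
      exact pow_le_one₀ hm.le hm1
    nlinarith
  rw [le_div_iff₀ (by positivity), mul_comm]
  exact (mul_le_mul_of_nonneg_right h3 (norm_nonneg _)).trans h2

lemma continuous_Gamma_line {g : ℝ → ℂ} (hg : Continuous g) (h : ∀ t, 0 < (g t).re) :
    Continuous fun t => Complex.Gamma (g t) := by
  rw [continuous_iff_continuousAt]
  intro t
  refine ContinuousAt.comp (g := Complex.Gamma) ?_ hg.continuousAt
  refine (Complex.differentiableAt_Gamma _ fun m hm => ?_).continuousAt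
  have := h t
  rw [hm] at this
  simp at this
  have h0 : (0 : ℝ) ≤ m := m.cast_nonneg
  linarith

lemma integrable_GG (lam c : ℝ) (hc0 : c < 0) (hcl : -lam < c) :
    Integrable (fun t : ℝ => Complex.Gamma (-((c : ℂ) + t * Complex.I)) *
        Complex.Gamma ((lam : ℂ) + (c : ℂ) + t * Complex.I)) := by
  obtain ⟨m, hm, hm1, hma, hmb⟩ : ∃ m : ℝ, 0 < m ∧ m ≤ 1 ∧ m ≤ -c ∧ m ≤ lam + c :=
    ⟨min 1 (min (-c) (lam + c)), by
      refine lt_min one_pos (lt_min ?_ ?_) <;> linarith, min_le_left _ _,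
      (min_le_right _ _).trans (min_le_left _ _), (min_le_right _ _).trans (min_le_right _ _)⟩
  refine Integrable.mono' (integrable_inv_one_add_sq.const_mul
    (Real.Gamma (-c + 1) * Real.Gamma (lam + c + 1) / m ^ 2)) ?_ (Filter.Eventually.of_forall ?_)
  · refine Continuous.aestronglyMeasurable (Continuous.mul ?_ ?_)
    · exact continuous_Gamma_line (by fun_prop) (fun t => by simp; linarith)
    · exact continuous_Gamma_line (by fun_prop) (fun t => by simp; linarith)
  · intro t
    have ha := norm_Gamma_le' (s := -((c : ℂ) + t * Complex.I)) hm hm1 (by simpa using hma)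
    have hb := norm_Gamma_le' (s := (lam : ℂ) + (c : ℂ) + t * Complex.I) hm hm1
      (by simpa using hmb)
    rw [norm_mul]
    refine (mul_le_mul ha hb (norm_nonneg _) ((norm_nonneg _).trans ha)).trans (le_of_eq ?_)
    have hsq : √(1 + t ^ 2) * √(1 + t ^ 2) = 1 + t ^ 2 := Real.mul_self_sqrt (by positivity)
    simp
    rw [div_mul_div_comm, mul_mul_mul_comm, hsq]
    field_simp

lemma image_map : (fun t : ℝ => t / (1 + t)) '' Set.Ioi 0 = Set.Ioo 0 1 := by
  ext y
  constructor
  · rintro ⟨t, ht, rfl⟩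
    have ht : 0 < t := ht
    exact ⟨by positivity, by rw [div_lt_one (by positivity)]; linarith⟩
  · rintro ⟨h0, h1⟩
    have : 0 < 1 - y := by linarith
    refine ⟨y / (1 - y), div_pos h0 this, ?_⟩
    have h3 : (1 + y / (1 - y)) = 1 / (1 - y) := by field_simp; ring
    simp only [h3]
    field_simp

lemma deriv_map : ∀ t ∈ Set.Ioi (0 : ℝ),
    HasDerivWithinAt (fun t : ℝ => t / (1 + t)) (1 / (1 + t) ^ 2) (Set.Ioi 0) t := by
  intro t ht
  have ht : 0 < t := ht
  have := (hasDerivAt_id t).div ((hasDerivAt_id t).const_add 1) (by simp; positivity)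
  convert! this.hasDerivWithinAt using 1
  simp

lemma inj_map : Set.InjOn (fun t : ℝ => t / (1 + t)) (Set.Ioi 0) := by
  intro a ha b hb h
  have ha : 0 < a := ha
  have hb : 0 < b := hb
  simp only at h
  rw [div_eq_div_iff (by positivity) (by positivity)] at h
  linarith

lemma integrand_eq (lam : ℝ) (s : ℂ) {t : ℝ} (ht : 0 < t) :
    |1 / (1 + t) ^ 2| • (((t / (1 + t) : ℝ) : ℂ) ^ (s - 1) *
      (1 - ((t / (1 + t) : ℝ) : ℂ)) ^ ((lam : ℂ) - s - 1)) =
    (t : ℂ) ^ (s - 1) • ((((1 + t) ^ (-lam) : ℝ)) : ℂ) := by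
  have h1 : (0 : ℝ) < 1 + t := by positivity
  have h1' : ((1 + t : ℝ) : ℂ) ≠ 0 := by exact_mod_cast h1.ne'
  have e1 : (1 - ((t / (1 + t) : ℝ) : ℂ)) = (((1 + t)⁻¹ : ℝ) : ℂ) := by
    rw [← Complex.ofReal_one, ← Complex.ofReal_sub]
    congr 1
    field_simp; ring
  rw [e1, div_eq_mul_inv t, Complex.ofReal_mul,
    Complex.mul_cpow_ofReal_nonneg ht.le (by positivity), mul_assoc,
    ← Complex.cpow_add _ _ (by exact_mod_cast (inv_pos.2 h1).ne'), abs_of_pos (by positivity),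
    Complex.real_smul, smul_eq_mul, Complex.ofReal_cpow h1.le]
  have e2 : (((1 + t)⁻¹ : ℝ) : ℂ) ^ (s - 1 + ((lam : ℂ) - s - 1)) =
      ((1 + t : ℝ) : ℂ) ^ ((-lam : ℝ) + 2 : ℂ) := by
    rw [Complex.ofReal_inv, Complex.inv_cpow, ← Complex.cpow_neg]
    · congr 1; push_cast; ring
    · rw [Complex.arg_ofReal_of_nonneg h1.le]; exact Real.pi_pos.ne
  rw [e2, Complex.cpow_add _ _ h1', Complex.cpow_ofNat]
  have : ((1 / (1 + t) ^ 2 : ℝ) : ℂ) * ((1 + t : ℝ) : ℂ) ^ 2 = 1 := by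
    rw [← Complex.ofReal_pow, ← Complex.ofReal_mul, one_div, inv_mul_cancel₀ (by positivity)]
    simp
  linear_combination ((t : ℂ) ^ (s - 1) * ((1 + t : ℝ) : ℂ) ^ ((-lam : ℝ) : ℂ)) * this

lemma hasMellin_f (lam : ℝ) {s : ℂ} (hs : 0 < s.re) (hs' : s.re < lam) :
    HasMellin (fun t : ℝ => ((((1 + t) ^ (-lam) : ℝ)) : ℂ)) s
      (Complex.betaIntegral s (lam - s)) := by
  have hb : 0 < ((lam : ℂ) - s).re := by simpa using hs'
  constructor
  · have h := Complex.betaIntegral_convergent hs hb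
    rw [intervalIntegrable_iff_integrableOn_Ioo_of_le zero_le_one, ← image_map,
      integrableOn_image_iff_integrableOn_abs_deriv_smul measurableSet_Ioi deriv_map inj_map] at h
    exact h.congr_fun (fun t ht => integrand_eq lam s ht) measurableSet_Ioi
  · rw [Complex.betaIntegral, intervalIntegral.integral_of_le zero_le_one,
      integral_Ioc_eq_integral_Ioo, ← image_map,
      integral_image_eq_integral_abs_deriv_smul measurableSet_Ioi deriv_map inj_map]
    exact (setIntegral_congr_fun measurableSet_Ioi (fun t ht => integrand_eq lam s ht)).symm

end MBAux

/-- Mellin–Barnes representation of `(1+x)^{-λ}`: for `λ > 0`, `x > 0` and a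
vertical contour `Re u = c` with `c ∈ (-λ, 0)` separating the poles of `Γ(-u)`
from those of `Γ(λ+u)`,
`(1/(2π)) ∫_{-∞}^∞ x^{c+it} Γ(-(c+it)) Γ(λ+c+it) dt = Γ(λ) (1+x)^{-λ}`. -/
theorem mellin_barnes_one_add_rpow (lam x c : ℝ) (hlam : 0 < lam) (hx : 0 < x)
    (hc0 : c < 0) (hcl : -lam < c) :
    Integrable (fun t : ℝ =>
      (x : ℂ) ^ ((c : ℂ) + t * Complex.I) *
        Complex.Gamma (-((c : ℂ) + t * Complex.I)) *
        Complex.Gamma ((lam : ℂ) + (c : ℂ) + t * Complex.I)) ∧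
    (1 / (2 * Real.pi) : ℂ) *
        ∫ t : ℝ, (x : ℂ) ^ ((c : ℂ) + t * Complex.I) *
          Complex.Gamma (-((c : ℂ) + t * Complex.I)) *
          Complex.Gamma ((lam : ℂ) + (c : ℂ) + t * Complex.I)
      = (Real.Gamma lam : ℂ) * ((1 + x : ℝ) ^ (-lam) : ℝ) := by
  have hGG := MBAux.integrable_GG lam c hc0 hcl
  have hx0 : (x : ℂ) ≠ 0 := by exact_mod_cast hx.ne'
  constructor
  · simp_rw [mul_assoc]
    refine hGG.bdd_mul (c := x ^ c) ?_ (Filter.Eventually.of_forall fun t => ?_)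
    · refine Continuous.aestronglyMeasurable ?_
      exact Continuous.const_cpow (by fun_prop) (Or.inl hx0)
    · rw [Complex.norm_cpow_eq_rpow_re_of_pos hx]
      simp
  · have hG0 : Complex.Gamma lam ≠ 0 := Complex.Gamma_ne_zero_of_re_pos (by simpa using hlam)
    set f : ℝ → ℂ := fun t : ℝ => ((((1 + t) ^ (-lam) : ℝ)) : ℂ) with hf
    have hM : ∀ y : ℝ, mellin f (((-c : ℝ) : ℂ) + y * Complex.I) =
        Complex.Gamma (-((c : ℂ) + (-y : ℝ) * Complex.I)) *
        Complex.Gamma ((lam : ℂ) + (c : ℂ) + (-y : ℝ) * Complex.I) / Complex.Gamma lam := by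
      intro y
      rw [(MBAux.hasMellin_f lam (s := ((-c : ℝ) : ℂ) + y * Complex.I) (by simpa using hc0)
        (by simp; linarith)).2, Complex.betaIntegral_eq_Gamma_mul_div _ _ (by simpa using hc0)
        (by simp; linarith)]
      congr 3 <;> push_cast <;> ring
    have hV : Complex.VerticalIntegrable (mellin f) (-c) := by
      unfold Complex.VerticalIntegrable
      simp_rw [hM]
      exact (hGG.comp_neg).div_const _
    have hcont : ContinuousAt f x := by
      refine Complex.continuous_ofReal.continuousAt.comp ?_
      exact ContinuousAt.rpow_const (by fun_prop) (Or.inl (by positivity))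
    have key := mellinInv_mellin_eq (-c) f hx
      (MBAux.hasMellin_f lam (s := ((-c : ℝ) : ℂ)) (by simpa using hc0)
        (by simp; linarith)).1 hV hcont
    rw [mellinInv] at key
    simp_rw [hM] at key
    rw [← Complex.Gamma_ofReal, show (((1 + x : ℝ) ^ (-lam) : ℝ) : ℂ) = f x from rfl, ← key,
      ← integral_neg_eq_self, Complex.real_smul, mul_left_comm,
      ← integral_const_mul (Complex.Gamma lam)]
    congr 1
    · push_cast; rfl
    · congr 1
      ext y
      rw [show -(((-c : ℝ) : ℂ) + y * Complex.I) = (c : ℂ) + (-y : ℝ) * Complex.I by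
        push_cast; ring, smul_eq_mul]
      field_simp
end
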